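/- Let n > d > 0 be integers, U ⊂ S_[n−d−1] a shifted order ideal of monomials of degree at most ⌊(d+1)/2⌋, B_d(U) the squeezed d-ball on [n], and I(U) ⊂ S_[n] the ideal generated by all monomials u ∈ S_[n−d−1] with u ∉ U. Then I_{B_d(U)} = α²(I(U)), where α² = α^a for a = (0,2,4,6,…). In particular, gin(I_{B_d(U)}) = I(U). -/

import Mathlib

/-!
Write `m = n - d - 1`, `J = I_{B_d(U)}`, `I = I(U)`, and identify a monomial with the weakly
increasing word `w_0 w_1 ⋯` of its variable indices.

**The Stanley–Reisner ideal.** A set `S ⊆ [n]` can be read greedily from left to right as a union of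
disjoint pairs `{p, p + 1}`, `p ∈ S`, up to a rest in a final interval; the smaller ends of the pairs
have the form `w_j + 2j` for a word `w` in the letters `1, …, m` (`exists_greedy_word`). By
construction `S ⊆ F_d(w)`, so a non-face has `w ∉ U` and its monomial is divisible by `α²(w)`. An
initial subword of `w` is a minimal generator of `I` (`exists_initial_mem_GSet`), whence `J ⊆ α²(I)`.
Conversely, if `α²(w)` is supported on `F_d(u)`, then an initial subword of `u` is `≼ w`
(`compare_of_subset_Fface`), so that `w ∉ U` forces `α²(w) ∈ J`.

**The generic initial ideal.** Let `φ` be an invertible matrix all of whose minors on initial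
segments of rows are nonzero, a nonempty open condition, and let `ℓ_j = φ(x_j)`. For a word
`w ∉ U` all smaller words `c ≼ w` are outside `U` too, so the span of the products
`ℓ_{c_0} ℓ_{c_1 + 2} ℓ_{c_2 + 4} ⋯`, `c ≼ w`, is contained in `φ(J)`. This span contains a polynomial
with leading monomial `w` (`exists_mem_lowerSpan_isLeadMon`): by induction on the length, it is
enough to see that modulo `x_{r+1}, x_{r+2}, …`, with `r` the last letter of `w`, multiplication by
`x_r` maps the span for the word without its last letter into the span for `w`. That is
`X_mul_shiftProd_mem`, an induction on the sum of the letters of `c`. Hence `I ⊆ in(φ(J))`.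

Equality follows by counting in each finite set of monomials of bounded degree in finitely many
variables. The intervals `[{i_1, i_2 + 2, …, i_k + 2(k-1)}, F_d(u)]`, `u ∈ U`, are pairwise disjoint
in `B_d(U)`, which gives an injection from the monomials outside `I` to those outside `J`
(`card_standard_le`); so an additional leading monomial would give more linearly independent
elements of `φ(J)` than the dimension allows (`mem_IU_of_isLeadMon`). Finally, over an infinite
field two nonempty open sets of matrices meet, so the ideal found in this way is `gin J`.
-/

open scoped Classical
noncomputable section
namespace SqueezedSpheres

/-! ### Monomials of `K[x₁,x₂,…]` as finitely supported exponent vectors (index 0 unused). -/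

/-- A monomial of the polynomial ring `S_[∞] = K[x₁,x₂,…]`, recorded by its exponent vector. -/
abbrev Mon : Type := ℕ →₀ ℕ

/-- The total degree of a monomial. -/
def degMon (u : Mon) : ℕ := u.sum fun _ e => e

/-- `m(u) = max{i : xᵢ divides u}` (with value `0` for `u = 1`). -/
def mVar (u : Mon) : ℕ := u.support.sup id

/-- The weakly increasing list `i₁ ≤ i₂ ≤ ⋯ ≤ i_d` of indices with `u = x_{i₁}⋯x_{i_d}`. -/
def sortedIdx (u : Mon) : List ℕ := (Finsupp.toMultiset u).sort (· ≤ ·)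

/-- `u ≼ v`: both have the same degree and, writing `u = x_{i₁}⋯x_{i_d}`,
`v = x_{j₁}⋯x_{j_d}` with weakly increasing indices, `i_k ≤ j_k` for all `k`. -/
def prec (u v : Mon) : Prop := List.Forall₂ (· ≤ ·) (sortedIdx u) (sortedIdx v)

/-- The squarefree monomial `x_S = ∏_{i ∈ S} x_i`. -/
def sqf (S : Finset ℕ) : Mon := Multiset.toFinsupp (S.val)

/-- `u` is a squarefree monomial. -/
def sqfreeMon (u : Mon) : Prop := ∀ j, u j ≤ 1

/-- The lexicographic order: `u <_lex v` iff the leftmost index where the exponent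
vectors differ has a larger exponent in `v`. -/
def lexLT (u v : Mon) : Prop := ∃ r, u r < v r ∧ ∀ t, t < r → u t = v t

/-- The degree reverse lexicographic order induced by `x₁ > x₂ > ⋯`:
`u <_drl v` iff `deg u < deg v`, or the degrees agree and at the largest index
where the exponent vectors differ `u` has the larger exponent. -/
def degrevlexLT (u v : Mon) : Prop :=
  degMon u < degMon v ∨ (degMon u = degMon v ∧ ∃ r, v r < u r ∧ ∀ t, r < t → u t = v t)

/-- The map `α^a` for a sequence `a : ℕ → ℕ` (with `a 0 = 0` in applications):
`α^a(x_{i₁}x_{i₂}⋯x_{i_k}) = x_{i₁} x_{i₂+a₁} x_{i₃+a₂} ⋯ x_{i_k+a_{k-1}}`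
for `i₁ ≤ i₂ ≤ ⋯ ≤ i_k`. -/
def alphaMap (a : ℕ → ℕ) (u : Mon) : Mon :=
  Multiset.toFinsupp (↑((sortedIdx u).mapIdx fun j i => i + a j))

variable (K : Type) [Field K]

/-! ### Monomial ideals of `S_[∞]`. -/

/-- The monomial `x^u` as a polynomial. -/
def mono (u : Mon) : MvPolynomial ℕ K := MvPolynomial.monomial u 1

/-- The monomial `x^u` belongs to the ideal `I`. -/
def memMon (I : Ideal (MvPolynomial ℕ K)) (u : Mon) : Prop := mono K u ∈ I

/-- The (finitely generated) monomial ideal generated by a finite set of monomials. -/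
def monSpan (G : Finset Mon) : Ideal (MvPolynomial ℕ K) :=
  Ideal.span ((fun u => mono K u) '' (↑G : Set Mon))

/-- `G(I)`: the minimal monomial generators of a monomial ideal `I`. -/
def GSet (I : Ideal (MvPolynomial ℕ K)) : Set Mon :=
  {u | memMon K I u ∧ ∀ i ∈ u.support, ¬ memMon K I (u - Finsupp.single i 1)}

/-- `max(I) = max{m(u) : u ∈ G(I)}`. -/
def maxIdx (I : Ideal (MvPolynomial ℕ K)) : ℕ := sSup (mVar '' GSet K I)

/-- For `σ : M_[∞] → M_[∞]`, the ideal `σ(I)` generated by `{σ(u) : u ∈ G(I)}`. -/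
def sigmaIdeal (σ : Mon → Mon) (I : Ideal (MvPolynomial ℕ K)) : Ideal (MvPolynomial ℕ K) :=
  Ideal.span ((fun u => mono K (σ u)) '' GSet K I)

/-- `I` is a finitely generated strongly stable (monomial) ideal of `S_[∞]`:
it is generated by finitely many monomials and is closed under the moves
`v ∈ I`, `u ≼ v` ⟹ `u ∈ I`. -/
def IsFGStronglyStable (I : Ideal (MvPolynomial ℕ K)) : Prop :=
  (∃ G : Finset Mon, I = monSpan K G) ∧
    ∀ u v : Mon, memMon K I v → prec u v → memMon K I u

/-- `I` is a finitely generated squarefree strongly stable ideal of `S_[∞]`. -/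
def IsFGSqfStronglyStable (I : Ideal (MvPolynomial ℕ K)) : Prop :=
  (∃ G : Finset Mon, (∀ u ∈ G, sqfreeMon u) ∧ I = monSpan K G) ∧
    ∀ u v : Mon, sqfreeMon u → sqfreeMon v → memMon K I v → prec u v → memMon K I u

/-! ### Simplicial homology over `K` of a finite simplicial complex,
used to define graded Betti numbers of monomial ideals (via upper Koszul
simplicial complexes, i.e. Hochster-type formulas) and the Cohen-Macaulay and
Gorenstein* properties (via Reisner-type criteria). -/

/-- Boundary map coefficient: the coefficient of the face `T` in `∂S`. -/
def bCoeff (S T : Finset ℕ) : K :=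
  if T ⊆ S ∧ S.card = T.card + 1 then
    (-1 : K) ^ (S.filter fun y => y < (S \ T).sum id).card
  else 0

/-- The simplicial boundary map from `i+1`-element faces to `i`-element faces. -/
def bdry (Δ : Finset (Finset ℕ)) (i : ℕ) :
    ((↥(Δ.filter fun S => S.card = i + 1) → K)) →ₗ[K]
      (↥(Δ.filter fun S => S.card = i) → K) :=
  Matrix.mulVecLin
    (Matrix.of fun (T : ↥(Δ.filter fun S => S.card = i))
        (S : ↥(Δ.filter fun S => S.card = i + 1)) =>
      bCoeff K (↑S : Finset ℕ) (↑T : Finset ℕ))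

/-- `redH K Δ i` is the dimension over `K` of the reduced simplicial homology
`H̃_{i-1}(Δ; K)`, computed at chain position `i` (faces of cardinality `i`);
in particular `redH K Δ 0 = dim H̃_{-1}`. -/
def redH (Δ : Finset (Finset ℕ)) : ℕ → ℕ
  | 0 => Module.finrank K (↥(Δ.filter fun S => S.card = 0) → K) -
      Module.finrank K ↥(LinearMap.range (bdry K Δ 0))
  | (i + 1) => Module.finrank K ↥(LinearMap.ker (bdry K Δ i)) -
      Module.finrank K ↥(LinearMap.range (bdry K Δ (i + 1)))

/-- Membership of `x^b` in the monomial ideal generated by `G`. -/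
def memGen (G : Finset Mon) (b : Mon) : Prop := ∃ g ∈ G, g ≤ b

/-- The upper Koszul simplicial complex `K^a(I)` of the monomial ideal generated
by `G` in multidegree `a`. -/
def koszulCx (G : Finset Mon) (a : Mon) : Finset (Finset ℕ) :=
  a.support.powerset.filter fun S => memGen G (a - sqf S)

/-- The graded Betti number `β_{i,j}` of the monomial ideal generated by `G`,
via Hochster's formula `β_{i,a}(I) = dim_K H̃_{i-1}(K^a(I); K)` summed over all
multidegrees `a` of total degree `j`. -/
def bettiGens (G : Finset Mon) (i j : ℕ) : ℕ :=
  ∑ a ∈ (Finset.Iic (G.sum id)).filter fun a => degMon a = j,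
    redH K (koszulCx G a) i

/-- The graded Betti numbers `β_{ij}(I) = dim_K Tor_i(I, K)_j` of a finitely
generated monomial ideal `I` (of value `0` on ideals that are not finitely
generated monomial ideals). -/
def betti (I : Ideal (MvPolynomial ℕ K)) (i j : ℕ) : ℕ :=
  if h : ∃ G : Finset Mon, I = monSpan K G then bettiGens K h.choose i j else 0

/-- The graded Betti numbers `β_{ij}(R/I)` of the quotient by a finitely
generated monomial ideal. -/
def bettiQ (I : Ideal (MvPolynomial ℕ K)) (i j : ℕ) : ℕ :=
  if i = 0 then (if j = 0 then 1 else 0) else betti K I (i - 1) j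

/-- `β_{ij}(R/I)` allowing integer indices (`0` for negative indices). -/
def bettiQZ (I : Ideal (MvPolynomial ℕ K)) (i j : ℤ) : ℕ :=
  if 0 ≤ i ∧ 0 ≤ j then bettiQ K I i.toNat j.toNat else 0

/-! ### Stable operators. -/

/-- A map `σ : M_[∞] → M_[∞]` is a stable operator if (i) it preserves all graded
Betti numbers of finitely generated strongly stable ideals and (ii) it preserves
inclusions of finitely generated strongly stable ideals. -/
structure IsStableOperator (σ : Mon → Mon) : Prop where
  betti_eq : ∀ I : Ideal (MvPolynomial ℕ K), IsFGStronglyStable K I →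
    ∀ i j, betti K I i j = betti K (sigmaIdeal K σ I) i j
  incl : ∀ J I : Ideal (MvPolynomial ℕ K), IsFGStronglyStable K J →
    IsFGStronglyStable K I → J ≤ I → sigmaIdeal K σ J ≤ sigmaIdeal K σ I

/-- A map `σ : M_[∞] → M_[∞]` is a squarefree stable operator if (i) it sends
finitely generated squarefree strongly stable ideals to squarefree monomial
ideals with the same graded Betti numbers and (ii) it preserves inclusions of
finitely generated squarefree strongly stable ideals. -/
structure IsSqfStableOperator (σ : Mon → Mon) : Prop where
  sqfree : ∀ I : Ideal (MvPolynomial ℕ K), IsFGSqfStronglyStable K I →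
    ∀ u ∈ GSet K I, sqfreeMon (σ u)
  betti_eq : ∀ I : Ideal (MvPolynomial ℕ K), IsFGSqfStronglyStable K I →
    ∀ i j, betti K I i j = betti K (sigmaIdeal K σ I) i j
  incl : ∀ J I : Ideal (MvPolynomial ℕ K), IsFGSqfStronglyStable K J →
    IsFGSqfStronglyStable K I → J ≤ I → sigmaIdeal K σ J ≤ sigmaIdeal K σ I

/-! ### Generic initial ideals with respect to the degree reverse
lexicographic order. -/

/-- `u` is the initial (leading) monomial of the polynomial `f` w.r.t. degrevlex. -/
def IsLeadMon (f : MvPolynomial ℕ K) (u : Mon) : Prop :=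
  u ∈ f.support ∧ ∀ v ∈ f.support, v ≠ u → degrevlexLT v u

/-- The initial ideal of `I` w.r.t. the degree reverse lexicographic order. -/
def inIdeal (I : Ideal (MvPolynomial ℕ K)) : Ideal (MvPolynomial ℕ K) :=
  Ideal.span {p | ∃ f ∈ I, ∃ u, IsLeadMon K f u ∧ p = mono K u}

/-- The action of a matrix `φ ∈ GL_n(K)` on polynomials,
`x_j ↦ ∑_i φ_{ij} x_i` for `1 ≤ j ≤ n`. -/
def gAct (n : ℕ) (φ : Matrix (Fin n) (Fin n) K) :
    MvPolynomial ℕ K →ₐ[K] MvPolynomial ℕ K :=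
  MvPolynomial.aeval fun j =>
    if h : 1 ≤ j ∧ j ≤ n then
      ∑ i : Fin n, MvPolynomial.C (φ i ⟨j - 1, by omega⟩) * MvPolynomial.X ((i : ℕ) + 1)
    else MvPolynomial.X j

/-- Evaluation of a polynomial in the `n × n` matrix entries at a matrix. -/
def evalMat (n : ℕ) (φ : Matrix (Fin n) (Fin n) K)
    (P : MvPolynomial (Fin n × Fin n) K) : K :=
  MvPolynomial.eval (fun p => φ p.1 p.2) P

/-- `J` is the generic initial ideal of `I` (w.r.t. degrevlex and the action of
`GL_n(K)` on `x₁,…,x_n`): there is a nonempty Zariski open subset of `GL_n(K)`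
on which `in(φ(I))` is constantly equal to `J`. -/
def GinSpec (n : ℕ) (I J : Ideal (MvPolynomial ℕ K)) : Prop :=
  ∃ P : MvPolynomial (Fin n × Fin n) K, P ≠ 0 ∧
    (∃ φ : Matrix (Fin n) (Fin n) K, IsUnit φ.det ∧ evalMat K n φ P ≠ 0) ∧
    ∀ φ : Matrix (Fin n) (Fin n) K, IsUnit φ.det → evalMat K n φ P ≠ 0 →
      inIdeal K (Ideal.map (gAct K n φ) I) = J

/-- The generic initial ideal `gin(I)` w.r.t. the degree reverse lexicographic
order (and coordinate changes of `x₁,…,x_n`). -/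
def gin (n : ℕ) (I : Ideal (MvPolynomial ℕ K)) : Ideal (MvPolynomial ℕ K) :=
  if h : ∃ J, GinSpec K n I J then h.choose else ⊥

/-- `gin(I)` for a finitely generated ideal of `S_[∞]`, computed in
`S_[max(I)]` as in the convention `gin(I) = gin(I ∩ S_[max(I)]) S_[∞]`. -/
def ginInf (I : Ideal (MvPolynomial ℕ K)) : Ideal (MvPolynomial ℕ K) :=
  gin K (maxIdx K I) I

/-! ### Simplicial complexes on `[n]`, Stanley-Reisner ideals, `f`-, `h`- and
`g`-vectors, Cohen-Macaulay and Gorenstein* complexes. -/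

/-- `Γ` is a simplicial complex on the vertex set `[n] = {1,…,n}`. -/
def IsComplexOn (n : ℕ) (Γ : Finset (Finset ℕ)) : Prop :=
  (∀ S ∈ Γ, S ⊆ Finset.Icc 1 n) ∧ (∀ S ∈ Γ, ∀ T ⊆ S, T ∈ Γ) ∧
    (∀ i ∈ Finset.Icc 1 n, ({i} : Finset ℕ) ∈ Γ)

/-- `Γ` is `(d-1)`-dimensional (all faces have at most `d` vertices, some face
has exactly `d` vertices). -/
def IsDimensional (Γ : Finset (Finset ℕ)) (d : ℕ) : Prop :=
  (∀ S ∈ Γ, S.card ≤ d) ∧ ∃ S ∈ Γ, S.card = d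

/-- The Stanley-Reisner ideal `I_Γ ⊂ S_[n]` of a simplicial complex on `[n]`. -/
def SRideal (n : ℕ) (Γ : Finset (Finset ℕ)) : Ideal (MvPolynomial ℕ K) :=
  Ideal.span {p | ∃ S : Finset ℕ, S ⊆ Finset.Icc 1 n ∧ S ∉ Γ ∧ p = mono K (sqf S)}

/-- `fvec Γ i = f_{i-1}(Γ)`, the number of faces of `Γ` with `i` vertices. -/
def fvec (Γ : Finset (Finset ℕ)) (i : ℕ) : ℕ := (Γ.filter fun S => S.card = i).card

/-- The `h`-vector of a `(d-1)`-dimensional complex: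
`h_i = ∑_{j=0}^{i} (-1)^{i-j} C(d-j, d-i) f_{j-1}`. -/
def hvec (Γ : Finset (Finset ℕ)) (d i : ℕ) : ℤ :=
  ∑ j ∈ Finset.range (i + 1),
    (-1 : ℤ) ^ (i - j) * (Nat.choose (d - j) (d - i) : ℤ) * (fvec Γ j : ℤ)

/-- The `g`-vector: `g₀ = 1` and `g_i = h_i - h_{i-1}`. -/
def gvec (Γ : Finset (Finset ℕ)) (d i : ℕ) : ℤ :=
  if i = 0 then 1 else hvec Γ d i - hvec Γ d (i - 1)

/-- The link of a face `S` in `Γ`. -/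
def linkOf (Γ : Finset (Finset ℕ)) (S : Finset ℕ) : Finset (Finset ℕ) :=
  Γ.filter fun T => Disjoint S T ∧ S ∪ T ∈ Γ

/-- `Γ` is Cohen-Macaulay over `K` (Reisner's criterion: for every face `S` and
every `i` below the dimension of the link of `S`, `H̃_{i-1}(link S; K) = 0`). -/
def IsCM (Γ : Finset (Finset ℕ)) : Prop :=
  ∀ S ∈ Γ, ∀ i < (linkOf Γ S).sup Finset.card, redH K (linkOf Γ S) i = 0

/-- `Γ` is a `(d-1)`-dimensional Gorenstein* complex over `K` (the standard
characterization: every link has the reduced homology of a sphere of the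
appropriate dimension). -/
def IsGorensteinStar (d : ℕ) (Γ : Finset (Finset ℕ)) : Prop :=
  IsDimensional Γ d ∧
    ∀ S ∈ Γ, ∀ i, redH K (linkOf Γ S) i = if i = d - S.card then 1 else 0

/-! ### The monomial sets `L(Γ)` and `U(Γ)`. -/

/-- `L_i(Γ)`: degree-`i` monomials of `S_[n-d]` not belonging to `gin(I_Γ)`. -/
def Lset (n d : ℕ) (Γ : Finset (Finset ℕ)) (i : ℕ) : Set Mon :=
  {u | (∀ j ∈ u.support, 1 ≤ j ∧ j ≤ n - d) ∧ degMon u = i ∧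
    ¬ memMon K (gin K n (SRideal K n Γ)) u}

/-- `L(Γ)`: monomials of `S_[n-d]` not belonging to `gin(I_Γ)`. -/
def LsetAll (n d : ℕ) (Γ : Finset (Finset ℕ)) : Set Mon :=
  {u | (∀ j ∈ u.support, 1 ≤ j ∧ j ≤ n - d) ∧ ¬ memMon K (gin K n (SRideal K n Γ)) u}

/-- `U(Γ)`: monomials of `S_[n-d-1]` not belonging to `gin(I_Γ)`. -/
def Uset (n d : ℕ) (Γ : Finset (Finset ℕ)) : Set Mon :=
  {u | (∀ j ∈ u.support, 1 ≤ j ∧ j ≤ n - d - 1) ∧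
    ¬ memMon K (gin K n (SRideal K n Γ)) u}

/-- `U_i(Γ)`: degree-`i` monomials of `S_[n-d-1]` not belonging to `gin(I_Γ)`. -/
def UsetDeg (n d : ℕ) (Γ : Finset (Finset ℕ)) (i : ℕ) : Set Mon :=
  {u ∈ Uset K n d Γ | degMon u = i}

/-! ### Lefschetz properties. -/

/-- The ideal generated by the variables outside `{x₁,…,x_n}`. -/
def outsideIdeal (n : ℕ) : Ideal (MvPolynomial ℕ K) :=
  Ideal.span {p | ∃ j : ℕ, (j = 0 ∨ n < j) ∧ p = MvPolynomial.X j}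

/-- A linear form in the variables `x₁,…,x_n`. -/
def IsLinForm (n : ℕ) (f : MvPolynomial ℕ K) : Prop :=
  f ∈ MvPolynomial.homogeneousSubmodule ℕ K 1 ∧ f.vars ⊆ Finset.Icc 1 n

/-- The `i`-th homogeneous component of the quotient by `J`, as a `K`-submodule. -/
def grPiece (J : Ideal (MvPolynomial ℕ K)) (i : ℕ) :
    Submodule K (MvPolynomial ℕ K ⧸ J) :=
  Submodule.map (Ideal.Quotient.mkₐ K J).toLinearMap
    (MvPolynomial.homogeneousSubmodule ℕ K i)

/-- The ideal `I_Γ + (θ₁,…,θ_d)` inside `S_[n]`, realized in `S_[∞]` by also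
killing the variables outside `{x₁,…,x_n}`. -/
def fullIdeal (n d : ℕ) (Γ : Finset (Finset ℕ)) (θ : Fin d → MvPolynomial ℕ K) :
    Ideal (MvPolynomial ℕ K) :=
  SRideal K n Γ ⊔ Ideal.span (Set.range θ) ⊔ outsideIdeal K n

/-- `θ₁,…,θ_d` is a system of parameters of `S_[n]/I_Γ` consisting of linear
forms (for a `(d-1)`-dimensional complex: the quotient by them is Artinian,
i.e. a finite dimensional `K`-vector space). -/
def IsLinearSOP (n d : ℕ) (Γ : Finset (Finset ℕ)) (θ : Fin d → MvPolynomial ℕ K) : Prop :=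
  (∀ k, IsLinForm K n (θ k)) ∧ Module.Finite K (MvPolynomial ℕ K ⧸ fullIdeal K n d Γ θ)

/-- Multiplication by (the class of) `f` is injective from the `i`-th to the
`i'`-th homogeneous component of the quotient by `J`. -/
def mulInjOn (J : Ideal (MvPolynomial ℕ K)) (f : MvPolynomial ℕ K) (i i' : ℕ) : Prop :=
  ∀ a b : MvPolynomial ℕ K ⧸ J, a ∈ grPiece K J i → b ∈ grPiece K J i →
    Ideal.Quotient.mk J f * a = Ideal.Quotient.mk J f * b → a = b

/-- Multiplication by (the class of) `f` maps the `i`-th homogeneous component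
of the quotient by `J` onto the `i'`-th one. -/
def mulSurjOnto (J : Ideal (MvPolynomial ℕ K)) (f : MvPolynomial ℕ K) (i i' : ℕ) : Prop :=
  ∀ c ∈ grPiece K J i', ∃ a ∈ grPiece K J i, Ideal.Quotient.mk J f * a = c

/-- The weak Lefschetz property of a `(d-1)`-dimensional (Gorenstein*)
complex `Γ` on `[n]`. -/
def HasWLP (n d : ℕ) (Γ : Finset (Finset ℕ)) : Prop :=
  ∃ (θ : Fin d → MvPolynomial ℕ K) (ω : MvPolynomial ℕ K),
    IsLinearSOP K n d Γ θ ∧ IsLinForm K n ω ∧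
    (∀ i, 1 ≤ i → i ≤ d / 2 → mulInjOn K (fullIdeal K n d Γ θ) ω (i - 1) i) ∧
    (∀ i, d / 2 < i → mulSurjOnto K (fullIdeal K n d Γ θ) ω (i - 1) i)

/-- The strong Lefschetz property of a `(d-1)`-dimensional (Gorenstein*)
complex `Γ` on `[n]`. -/
def HasSLP (n d : ℕ) (Γ : Finset (Finset ℕ)) : Prop :=
  ∃ (θ : Fin d → MvPolynomial ℕ K) (ω : MvPolynomial ℕ K),
    IsLinearSOP K n d Γ θ ∧ IsLinForm K n ω ∧
    ∀ i ≤ d / 2,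
      mulInjOn K (fullIdeal K n d Γ θ) (ω ^ (d - 2 * i)) i (d - i) ∧
      mulSurjOnto K (fullIdeal K n d Γ θ) (ω ^ (d - 2 * i)) i (d - i)

/-! ### Shifted order ideals of monomials, squeezed balls and squeezed spheres. -/

/-- `U` is a shifted order ideal of monomials of `S_[m]`:
it contains `1, x₁,…,x_m`, consists of monomials in `x₁,…,x_m`, is closed
under taking divisors, and is closed under `u ∈ U`, `u ≼ v` ⟹ `v ∈ U`. -/
def IsShiftedOrderIdeal (m : ℕ) (U : Finset Mon) : Prop :=
  ((0 : Mon) ∈ U) ∧ (∀ i, 1 ≤ i → i ≤ m → (Finsupp.single i 1 : Mon) ∈ U) ∧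
  (∀ u ∈ U, ∀ j ∈ (u : Mon).support, 1 ≤ j ∧ j ≤ m) ∧
  (∀ u ∈ U, ∀ v : Mon, v ≤ u → v ∈ U) ∧
  (∀ u ∈ U, ∀ v : Mon, prec u v → (∀ j ∈ v.support, 1 ≤ j ∧ j ≤ m) → v ∈ U)

/-- `I(U) ⊂ S_[∞]`: the ideal generated by all monomials of `S_[m]` not in `U`. -/
def IU (m : ℕ) (U : Finset Mon) : Ideal (MvPolynomial ℕ K) :=
  Ideal.span {p | ∃ u : Mon, (∀ j ∈ u.support, 1 ≤ j ∧ j ≤ m) ∧ u ∉ U ∧ p = mono K u}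

/-- The facet `F_d(u) ⊂ [n]` associated with a monomial `u = x_{i₁}⋯x_{i_k}`,
`i₁ ≤ ⋯ ≤ i_k`:
`F_d(u) = {i₁, i₁+1} ∪ {i₂+2, i₂+3} ∪ ⋯ ∪ {i_k+2(k-1), i_k+2k-1} ∪ {n+2k-d,…,n}`. -/
def Fface (n d : ℕ) (u : Mon) : Finset ℕ :=
  ((Finset.range (degMon u)).biUnion fun j =>
      {(sortedIdx u).getD j 0 + 2 * j, (sortedIdx u).getD j 0 + 2 * j + 1}) ∪
    Finset.Icc (n + 2 * degMon u - d) n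

/-- The squeezed `d`-ball `B_d(U)`: the simplicial complex on `[n]` generated by
`{F_d(u) : u ∈ U}`. -/
def squeezedBall (n d : ℕ) (U : Finset Mon) : Finset (Finset ℕ) :=
  U.biUnion fun u => (Fface n d u).powerset

/-- The squeezed `(d-1)`-sphere `S_d(U) = ∂B_d(U)`: the subcomplex of `B_d(U)`
generated by the `d`-element faces lying in exactly one facet. -/
def squeezedSphere (n d : ℕ) (U : Finset Mon) : Finset (Finset ℕ) :=
  ((squeezedBall n d U).filter fun G => G.card = d ∧
      ((U.image fun u => Fface n d u).filter fun F => G ⊆ F).card = 1).biUnion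
    Finset.powerset

end SqueezedSpheres

/-! ### Linear quotients auxiliary data. -/

namespace SqueezedSpheres
open scoped Classical
noncomputable section

/-- For `u = x_{i₁}⋯x_{i_d}` with `i₁ ≤ ⋯ ≤ i_d`: `iIdx u l = i_l`, with the
convention `i₀ = 1`. -/
def iIdx (u : Mon) (l : ℕ) : ℕ := if l = 0 then 1 else (sortedIdx u).getD (l - 1) 0

/-- The set `⋃_{l=0}^{d-1} {k : i_l + a_l ≤ k < i_{l+1} + a_l}` (where `i₀ = 1`
and `a₀ = 0`). -/
def ASet (a : ℕ → ℕ) (u : Mon) : Set ℕ :=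
  {k | ∃ l < degMon u, iIdx u l + a l ≤ k ∧ k < iIdx u (l + 1) + a l}

/-! ### Polytopal spheres. -/

/-- `S` is the vertex set of a proper (exposed) face of the polytope with
vertices `v i`, `i ∈ [n]`. -/
def IsProperFaceSet (n d : ℕ) (v : ℕ → (Fin d → ℝ)) (S : Finset ℕ) : Prop :=
  ∃ (ℓ : (Fin d → ℝ) →ₗ[ℝ] ℝ) (c : ℝ),
    (∀ i ∈ Finset.Icc 1 n, ℓ (v i) ≤ c) ∧
    (∀ i ∈ Finset.Icc 1 n, (ℓ (v i) = c ↔ i ∈ S)) ∧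
    (∃ i ∈ Finset.Icc 1 n, ℓ (v i) < c)

/-- `Γ` is (isomorphic to) the boundary complex of a simplicial `d`-polytope
with `n` vertices: there is an injective placement `v` of the vertices `[n]` in
`ℝ^d` spanning affinely, each `v i` a vertex (extreme point) of the convex hull,
every proper face a simplex, such that the nonempty faces of `Γ` are exactly
the vertex sets of proper faces of the polytope. -/
def IsPolytopalSphere (n d : ℕ) (Γ : Finset (Finset ℕ)) : Prop :=
  ∃ v : ℕ → (Fin d → ℝ),
    Set.InjOn v ↑(Finset.Icc 1 n) ∧
    affineSpan ℝ (v '' ↑(Finset.Icc 1 n)) = ⊤ ∧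
    (∀ i ∈ Finset.Icc 1 n, v i ∉ convexHull ℝ (v '' ↑((Finset.Icc 1 n).erase i))) ∧
    (∀ S : Finset ℕ, S ⊆ Finset.Icc 1 n → IsProperFaceSet n d v S →
      AffineIndependent ℝ fun i : ↥S => v ↑i) ∧
    (∀ S : Finset ℕ, S.Nonempty →
      (S ∈ Γ ↔ S ⊆ Finset.Icc 1 n ∧ IsProperFaceSet n d v S)) ∧
    (∅ : Finset ℕ) ∈ Γ

/-! ### Exterior algebraic shifting.

For a generic matrix `g ∈ GL_n(K)` the image of the exterior monomial `e_S` in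
the exterior face ring `E/J_Γ` has, in the basis `{e_T : T ∈ Γ}`, coordinates
`± det g[T,S]`; `S` is a face of the exterior algebraic shifted complex
`Δ^e(Γ)` (defined by `J_{Δ^e(Γ)} = Gin(J_Γ)` w.r.t. degrevlex) if and only if
this image does not lie in the span of the images of the `e_T` with
`T <_drl S`. -/

variable (K : Type) [Field K]

/-- Matrix entry `g_{st}` for `1`-based indices `s, t ∈ [n]`. -/
def gEnt (n : ℕ) (g : Matrix (Fin n) (Fin n) K) (s t : ℕ) : K :=
  if hs : s - 1 < n then if ht : t - 1 < n then g ⟨s - 1, hs⟩ ⟨t - 1, ht⟩ else 0 else 0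

/-- The minor `det g[T, S]` of rows `T` and columns `S` (two subsets of `[n]` of
equal cardinality, taken in increasing order). -/
def subDet (n : ℕ) (g : Matrix (Fin n) (Fin n) K) (T S : Finset ℕ) : K :=
  if h : T.card = S.card then
    Matrix.det (Matrix.of fun a b : Fin S.card =>
      gEnt K n g (T.orderEmbOfFin h a) (S.orderEmbOfFin rfl b))
  else 0

/-- The coordinate vector (in the basis of faces of `Γ`) of the image of the
generic exterior monomial `e_S` in the exterior face ring of `Γ`. -/
def lamVec (n : ℕ) (Γ : Finset (Finset ℕ)) (g : Matrix (Fin n) (Fin n) K)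
    (S : Finset ℕ) : Finset ℕ → K :=
  fun T => if T ∈ Γ ∧ T.card = S.card then subDet K n g T S else 0

/-- Degrevlex on squarefree monomials: `S <_drl T` (for `|S| = |T|`) iff the
largest element of the symmetric difference belongs to `S`. -/
def drlSetLT (S T : Finset ℕ) : Prop :=
  ∃ r ∈ S, r ∉ T ∧ ∀ t, r < t → (t ∈ S ↔ t ∈ T)

/-- `Δ` is the exterior algebraic shifted complex `Δ^e(Γ)` (i.e.
`J_Δ = Gin(J_Γ)`, the generic initial ideal of the exterior face ideal of `Γ`
w.r.t. degrevlex): for every matrix `g` in a nonempty Zariski open subset of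
`GL_n(K)`, a subset `S ⊆ [n]` is a face of `Δ` iff the image of the generic
exterior monomial `e_S` in the exterior face ring of `Γ` does not lie in the
span of the images of the `e_T` with `T <_drl S`. -/
def DeltaESpec (n : ℕ) (Γ Δ : Finset (Finset ℕ)) : Prop :=
  ∃ P : MvPolynomial (Fin n × Fin n) K, P ≠ 0 ∧
    (∃ g : Matrix (Fin n) (Fin n) K, IsUnit g.det ∧ evalMat K n g P ≠ 0) ∧
    ∀ g : Matrix (Fin n) (Fin n) K, IsUnit g.det → evalMat K n g P ≠ 0 →
      ∀ S : Finset ℕ, S ∈ Δ ↔ S ⊆ Finset.Icc 1 n ∧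
        lamVec K n Γ g S ∉ Submodule.span K
          {w | ∃ T : Finset ℕ, T ⊆ Finset.Icc 1 n ∧ T.card = S.card ∧
            drlSetLT T S ∧ w = lamVec K n Γ g T}

/-- The exterior algebraic shifted complex `Δ^e(Γ)` of a complex on `[n]`. -/
def deltaE (n : ℕ) (Γ : Finset (Finset ℕ)) : Finset (Finset ℕ) :=
  if h : ∃ Δ, DeltaESpec K n Γ Δ then h.choose else ∅

/-- The complex `σ(Γ)` on `[n]` defined by `I_{σ(Γ)} = σ(I_Γ S_[∞]) ∩ S_[n]`. -/
def sigmaCplx (n : ℕ) (σ : Mon → Mon) (Γ : Finset (Finset ℕ)) : Finset (Finset ℕ) :=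
  (Finset.Icc 1 n).powerset.filter fun S =>
    ¬ memMon K (sigmaIdeal K σ (SRideal K n Γ)) (sqf S)

/-! ### Squeezing. -/

/-- `U(Γ)` as a finite set of monomials. -/
def UFin (n d : ℕ) (Γ : Finset (Finset ℕ)) : Finset Mon :=
  if h : (Uset K n d Γ).Finite then h.toFinset else ∅

/-- The squeezing operation `Sq(Γ) = S_d(U(Γ))`. -/
def SqCplx (n d : ℕ) (Γ : Finset (Finset ℕ)) : Finset (Finset ℕ) :=
  squeezedSphere n d (UFin K n d Γ)

/-- The face `{i₁, i₂+1, …, i_k+k-1} ∪ {n-k+1,…,n}` associated with a monomial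
`u = x_{i₁}⋯x_{i_k}`, `i₁ ≤ ⋯ ≤ i_k`. -/
def Lface (n : ℕ) (u : Mon) : Finset ℕ :=
  ((Finset.range (degMon u)).image fun j => (sortedIdx u).getD j 0 + j) ∪
    Finset.Icc (n - degMon u + 1) n

end
end SqueezedSpheres

namespace SqueezedSpheres

noncomputable section

/-! ### Monomials as words -/

/-- The monomial `x_{w 0} x_{w 1} ⋯ x_{w (k-1)}` of the first `k` letters of `w`. -/
def wordMon (k : ℕ) (w : ℕ → ℕ) : Mon := ∑ j ∈ Finset.range k, Finsupp.single (w j) 1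

/-- The first `k` letters of `w` are weakly increasing. -/
def WSorted (k : ℕ) (w : ℕ → ℕ) : Prop := ∀ i j, i ≤ j → j < k → w i ≤ w j

/-- The `j`-th smallest variable index of `u`, with multiplicity, counting from `j = 0`
(and `0` for `j ≥ deg u`). -/
def idx (u : Mon) (j : ℕ) : ℕ := (sortedIdx u).getD j 0

lemma wordMon_succ (k : ℕ) (w : ℕ → ℕ) :
    wordMon (k + 1) w = wordMon k w + Finsupp.single (w k) 1 := by
  simp [wordMon, Finset.sum_range_succ]

lemma wordMon_zero (w : ℕ → ℕ) : wordMon 0 w = 0 := by simp [wordMon]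

lemma wordMon_congr {k : ℕ} {w w' : ℕ → ℕ} (h : ∀ j < k, w j = w' j) :
    wordMon k w = wordMon k w' :=
  Finset.sum_congr rfl fun j hj => by rw [h j (Finset.mem_range.1 hj)]

lemma wordMon_mono {k l : ℕ} (h : k ≤ l) (w : ℕ → ℕ) : wordMon k w ≤ wordMon l w :=
  Finset.sum_le_sum_of_subset (Finset.range_mono h)

lemma degMon_add (u v : Mon) : degMon (u + v) = degMon u + degMon v :=
  Finsupp.sum_add_index' (fun _ => rfl) (fun _ _ _ => rfl)

lemma degMon_single (i e : ℕ) : degMon (Finsupp.single i e) = e := by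
  simp [degMon]

lemma degMon_zero : degMon 0 = 0 := by simp [degMon]

lemma degMon_wordMon (k : ℕ) (w : ℕ → ℕ) : degMon (wordMon k w) = k := by
  induction k with
  | zero => simp [wordMon_zero, degMon_zero]
  | succ k ih => rw [wordMon_succ, degMon_add, ih, degMon_single]

lemma mem_support_wordMon {k : ℕ} {w : ℕ → ℕ} {i : ℕ} :
    i ∈ (wordMon k w).support ↔ ∃ j < k, w j = i := by
  induction k with
  | zero => simp [wordMon_zero]
  | succ k ih =>
    have : i ∈ (wordMon (k + 1) w).support ↔ i ∈ (wordMon k w).support ∨ w k = i := by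
      rw [wordMon_succ]
      simp only [Finsupp.mem_support_iff, Finsupp.add_apply, Finsupp.single_apply]
      split_ifs with h <;> simp [h]
    rw [this, ih]
    constructor
    · rintro (⟨j, hj, rfl⟩ | h)
      · exact ⟨j, by omega, rfl⟩
      · exact ⟨k, by omega, h⟩
    · rintro ⟨j, hj, h⟩
      rcases Nat.lt_succ_iff_lt_or_eq.1 hj with h1 | rfl
      · exact Or.inl ⟨j, h1, h⟩
      · exact Or.inr h

lemma toMultiset_wordMon (k : ℕ) (w : ℕ → ℕ) :
    Finsupp.toMultiset (wordMon k w) = ((List.range k).map w : List ℕ) := by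
  induction k with
  | zero => simp [wordMon_zero]
  | succ k ih =>
    rw [wordMon_succ, map_add, ih, Finsupp.toMultiset_single, List.range_succ, List.map_append,
      ← Multiset.coe_add]
    simp

lemma sortedIdx_wordMon {k : ℕ} {w : ℕ → ℕ} (hw : WSorted k w) :
    sortedIdx (wordMon k w) = (List.range k).map w := by
  unfold sortedIdx
  rw [toMultiset_wordMon, Multiset.coe_sort]
  apply List.mergeSort_eq_self
  rw [List.pairwise_map]
  refine List.Pairwise.imp_of_mem ?_ (List.pairwise_lt_range (n := k))
  intro a b _ hb hab
  exact hw a b hab.le (List.mem_range.1 hb)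

lemma idx_wordMon {k : ℕ} {w : ℕ → ℕ} (hw : WSorted k w) {j : ℕ} (hj : j < k) :
    idx (wordMon k w) j = w j := by
  simp [idx, sortedIdx_wordMon hw, List.getD, hj]

lemma length_sortedIdx (u : Mon) : (sortedIdx u).length = degMon u := by
  unfold sortedIdx
  rw [Multiset.length_sort, Finsupp.card_toMultiset]
  rfl

lemma wSorted_idx (u : Mon) : WSorted (degMon u) (idx u) := by
  intro i j hij hj
  rw [← length_sortedIdx] at hj
  have h := Multiset.pairwise_sort (Finsupp.toMultiset u) (· ≤ ·)
  rcases hij.eq_or_lt with rfl | hlt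
  · exact le_rfl
  · have := List.pairwise_iff_getElem.1 h i j (hlt.trans hj) hj hlt
    have hi := hlt.trans hj
    simp only [idx, List.getD, List.getElem?_eq_getElem hj, List.getElem?_eq_getElem hi,
      Option.getD_some]
    exact this

lemma wordMon_idx (u : Mon) : wordMon (degMon u) (idx u) = u := by
  apply Multiset.toFinsupp.symm.injective
  show Finsupp.toMultiset _ = Finsupp.toMultiset _
  rw [toMultiset_wordMon]
  have h : ((List.range (degMon u)).map (idx u)) = sortedIdx u := by
    apply List.ext_getElem
    · simp [length_sortedIdx]
    · intro i h1 h2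
      simp [idx, List.getD, h2]
  rw [h]
  exact Multiset.sort_eq _ _

lemma prec_wordMon {k : ℕ} {u w : ℕ → ℕ} (hu : WSorted k u) (hw : WSorted k w)
    (h : ∀ j < k, u j ≤ w j) : prec (wordMon k u) (wordMon k w) := by
  unfold prec
  rw [sortedIdx_wordMon hu, sortedIdx_wordMon hw, List.forall₂_iff_get]
  refine ⟨by simp, ?_⟩
  intro i h1 h2
  simpa using h i (by simpa using h1)

lemma alphaMap_wordMon (a : ℕ → ℕ) {k : ℕ} {w : ℕ → ℕ} (hw : WSorted k w) :
    alphaMap a (wordMon k w) = wordMon k fun j => w j + a j := by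
  unfold alphaMap
  rw [sortedIdx_wordMon hw, ← Finsupp.toMultiset_toFinsupp (wordMon k fun j => w j + a j),
    toMultiset_wordMon]
  congr 2
  apply List.ext_getElem
  · simp
  · intro i h1 h2
    simp

lemma mem_Fface {n d : ℕ} {u : Mon} {x : ℕ} : x ∈ Fface n d u ↔
    (∃ j < degMon u, x = idx u j + 2 * j ∨ x = idx u j + 2 * j + 1) ∨
      (n + 2 * degMon u - d ≤ x ∧ x ≤ n) := by
  simp [Fface, idx]

lemma sqf_apply (S : Finset ℕ) (i : ℕ) : sqf S i = if i ∈ S then 1 else 0 := by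
  simp [sqf, Multiset.toFinsupp_apply, Multiset.count_eq_of_nodup S.nodup]

lemma wordMon_eq_sqf {k : ℕ} {p : ℕ → ℕ} (hp : Set.InjOn p (Set.Iio k)) :
    wordMon k p = sqf ((Finset.range k).image p) := by
  ext i
  rw [sqf_apply]
  induction k with
  | zero => simp [wordMon_zero]
  | succ k ih =>
    rw [wordMon_succ, Finsupp.add_apply, ih (hp.mono (Set.Iio_subset_Iio (Nat.le_succ k))),
      Finset.range_add_one, Finset.image_insert, Finsupp.single_apply]
    by_cases h : p k = i
    · have : i ∉ (Finset.range k).image p := by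
        simp only [Finset.mem_image, Finset.mem_range, not_exists, not_and]
        intro x hx hxi
        have := hp (show x ∈ Set.Iio (k + 1) by simp; omega)
          (show k ∈ Set.Iio (k + 1) by simp) (hxi.trans h.symm)
        omega
      rw [if_neg this]
      simp [h]
    · simp only [Finset.mem_insert, if_neg h, add_zero]
      simp only [Ne.symm h, false_or]

/-! ### Faces of squeezed balls and the ideal `α²(I(U))` -/

/-- If the shift `w_0, w_1 + 2, …` of a word in the letters `≤ n - d - 1` lies in `F_d(u)`, then
the `j`-th letter of `u` is at most `w_j`: the `j`-th shifted letter can only lie in the pair of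
index `j` or a later one. -/
lemma compare_of_subset_Fface {n d : ℕ} (hn : d < n) {u : Mon} {k : ℕ} {w : ℕ → ℕ}
    (hw : WSorted k w) (hwm : ∀ j < k, w j ≤ n - d - 1)
    (h : ∀ j < k, w j + 2 * j ∈ Fface n d u) :
    k ≤ degMon u ∧ ∀ j < k, idx u j ≤ w j := by
  have key : ∀ j < k, ∃ f, j ≤ f ∧ f < degMon u ∧
      (w j + 2 * j = idx u f + 2 * f ∨ w j + 2 * j = idx u f + 2 * f + 1) := by
    intro j
    induction j with
    | zero =>
      intro hj
      have hm := hwm 0 hj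
      rcases mem_Fface.1 (h 0 hj) with ⟨f, hf, hx⟩ | hx
      · exact ⟨f, by omega, hf, hx⟩
      · omega
    | succ j ih =>
      intro hj
      obtain ⟨f, hjf, hf, hx⟩ := ih (by omega)
      have hm := hwm (j + 1) hj
      have hs := hw j (j + 1) (by omega) hj
      rcases mem_Fface.1 (h (j + 1) hj) with ⟨f', hf', hx'⟩ | hx'
      · refine ⟨f', ?_, hf', hx'⟩
        by_contra hlt
        have := wSorted_idx u f' f (by omega) hf
        omega
      · omega
  refine ⟨?_, fun j hj => ?_⟩
  · rcases Nat.eq_zero_or_pos k with rfl | hk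
    · omega
    · obtain ⟨f, h1, h2, -⟩ := key (k - 1) (by omega)
      omega
  · obtain ⟨f, h1, h2, h3⟩ := key j hj
    have := wSorted_idx u j f h1 h2
    omega

/-- Reading a set `S` of positive integers from left to right and greedily covering it by
disjoint pairs `{p, p + 1}` with `p ∈ S` produces a word. The reading stops when all
remaining elements lie in the final interval `[m + 1 + 2k, ∞)`. -/
lemma exists_greedy_word (m : ℕ) (S : Finset ℕ) (hS : ∀ s ∈ S, 1 ≤ s) :
    ∃ (k : ℕ) (w : ℕ → ℕ), WSorted k w ∧ (∀ j < k, 1 ≤ w j ∧ w j ≤ m) ∧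
      (∀ j < k, w j + 2 * j ∈ S) ∧
      ∀ s ∈ S, (∃ j < k, s = w j + 2 * j ∨ s = w j + 2 * j + 1) ∨ m + 1 + 2 * k ≤ s := by
  have key : ∀ t : ℕ, ∃ (k : ℕ) (w : ℕ → ℕ), WSorted k w ∧ (∀ j < k, 1 ≤ w j ∧ w j ≤ m) ∧
      (∀ j < k, w j + 2 * j ∈ S ∧ w j + 2 * j < t) ∧
      ∀ s ∈ S, s < t →
        (∃ j < k, s = w j + 2 * j ∨ s = w j + 2 * j + 1) ∨ m + 1 + 2 * k ≤ s := by
    intro t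
    induction t with
    | zero => exact ⟨0, fun _ => 0, by intro i j _ h; omega, by simp, by simp, by simp⟩
    | succ t ih =>
      obtain ⟨k, w, hw, hm, hmem, hcov⟩ := ih
      by_cases hold : t ∈ S →
          (∃ j < k, t = w j + 2 * j ∨ t = w j + 2 * j + 1) ∨ m + 1 + 2 * k ≤ t
      · refine ⟨k, w, hw, hm, fun j hj => ⟨(hmem j hj).1, by have := (hmem j hj).2; omega⟩, ?_⟩
        intro s hs hst
        rcases Nat.lt_succ_iff_lt_or_eq.1 hst with h | rfl
        · exact hcov s hs h
        · exact hold hs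
      · push Not at hold
        obtain ⟨htS, hne, hlt⟩ := hold
        have hle : ∀ j < k, w j + 2 * k ≤ t := by
          intro j hj
          have h1 := hw j (k - 1) (by omega) (by omega)
          have h2 := hne (k - 1) (by omega)
          have h3 := hmem (k - 1) (by omega)
          omega
        have h2k : 1 + 2 * k ≤ t := by
          rcases Nat.eq_zero_or_pos k with rfl | hk
          · simpa using hS t htS
          · have := hle 0 hk
            have := hm 0 hk
            omega
        have hold' : ∀ j < k, Function.update w k (t - 2 * k) j = w j := fun j hj =>
          Function.update_of_ne (by omega) _ _
        have hnew : Function.update w k (t - 2 * k) k = t - 2 * k := Function.update_self _ _ _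
        refine ⟨k + 1, Function.update w k (t - 2 * k), ?_, ?_, ?_, ?_⟩
        · intro i j hij hj
          rcases Nat.lt_succ_iff_lt_or_eq.1 hj with h | rfl
          · rw [hold' j h, hold' i (by omega)]
            exact hw i j hij h
          · rw [hnew]
            rcases hij.eq_or_lt with rfl | h
            · rw [hnew]
            · rw [hold' i h]
              have := hle i h
              omega
        · intro j hj
          rcases Nat.lt_succ_iff_lt_or_eq.1 hj with h | rfl
          · rw [hold' j h]
            exact hm j h
          · rw [hnew]
            omega
        · intro j hj
          rcases Nat.lt_succ_iff_lt_or_eq.1 hj with h | rfl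
          · rw [hold' j h]
            exact ⟨(hmem j h).1, by have := (hmem j h).2; omega⟩
          · rw [hnew, Nat.sub_add_cancel (by omega)]
            exact ⟨htS, by omega⟩
        · intro s hs hst
          rcases Nat.lt_succ_iff_lt_or_eq.1 hst with h | rfl
          · rcases hcov s hs h with ⟨j, hj, hjs⟩ | h'
            · exact Or.inl ⟨j, by omega, by rwa [hold' j hj]⟩
            · omega
          · exact Or.inl ⟨k, by omega, by rw [hnew]; omega⟩
  obtain ⟨k, w, h1, h2, h3, h4⟩ := key (S.sup id + 1)
  refine ⟨k, w, h1, h2, fun j hj => (h3 j hj).1, fun s hs => h4 s hs ?_⟩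
  exact Nat.lt_succ_of_le (Finset.le_sup (f := id) hs)

lemma mem_squeezedBall {n d : ℕ} {U : Finset Mon} {S : Finset ℕ} :
    S ∈ squeezedBall n d U ↔ ∃ u ∈ U, S ⊆ Fface n d u := by
  simp [squeezedBall]

lemma mono_add (K : Type) [Field K] (u v : Mon) : mono K (u + v) = mono K u * mono K v := by
  simp [mono, MvPolynomial.monomial_mul]

lemma mem_of_le {K : Type} [Field K] {I : Ideal (MvPolynomial ℕ K)} {u v : Mon}
    (h : mono K u ∈ I) (huv : u ≤ v) : mono K v ∈ I := by
  rw [← tsub_add_cancel_of_le huv, mono_add]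
  exact I.mul_mem_left _ h

lemma mem_IU {K : Type} [Field K] {m : ℕ} {U : Finset Mon} {p : MvPolynomial ℕ K} :
    p ∈ IU K m U ↔ ∀ v ∈ p.support, ∃ g : Mon,
      (∀ j ∈ g.support, 1 ≤ j ∧ j ≤ m) ∧ g ∉ U ∧ g ≤ v := by
  have : IU K m U = Ideal.span ((fun s : Mon => MvPolynomial.monomial s (1 : K)) ''
      {g | (∀ j ∈ g.support, 1 ≤ j ∧ j ≤ m) ∧ g ∉ U}) := by
    unfold IU
    congr 1
    ext p
    simp only [Set.mem_ofPred_eq, Set.mem_image, mono, and_assoc, eq_comm]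
  rw [this, MvPolynomial.mem_ideal_span_monomial_image]
  simp only [Set.mem_ofPred_eq, and_assoc]

lemma mem_SRideal {K : Type} [Field K] {n : ℕ} {Γ : Finset (Finset ℕ)}
    {p : MvPolynomial ℕ K} :
    p ∈ SRideal K n Γ ↔ ∀ v ∈ p.support, ∃ S : Finset ℕ, S ⊆ Finset.Icc 1 n ∧ S ∉ Γ ∧
      sqf S ≤ v := by
  have : SRideal K n Γ = Ideal.span ((fun s : Mon => MvPolynomial.monomial s (1 : K)) ''
      {g | ∃ S : Finset ℕ, S ⊆ Finset.Icc 1 n ∧ S ∉ Γ ∧ g = sqf S}) := by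
    unfold SRideal
    congr 1
    ext p
    simp only [Set.mem_ofPred_eq, Set.mem_image, mono]
    constructor
    · rintro ⟨S, h1, h2, rfl⟩
      exact ⟨_, ⟨S, h1, h2, rfl⟩, rfl⟩
    · rintro ⟨_, ⟨S, h1, h2, rfl⟩, rfl⟩
      exact ⟨S, h1, h2, rfl⟩
  rw [this, MvPolynomial.mem_ideal_span_monomial_image]
  refine forall₂_congr fun v _ => ?_
  constructor
  · rintro ⟨_, ⟨S, h1, h2, rfl⟩, h⟩
    exact ⟨S, h1, h2, h⟩
  · rintro ⟨S, h1, h2, h⟩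
    exact ⟨_, ⟨S, h1, h2, rfl⟩, h⟩

lemma support_mono (K : Type) [Field K] (u : Mon) : (mono K u).support = {u} := by
  simp [mono, MvPolynomial.support_monomial]

lemma mono_mem_IU {K : Type} [Field K] {m : ℕ} {U : Finset Mon} {v : Mon} :
    mono K v ∈ IU K m U ↔ ∃ g : Mon,
      (∀ j ∈ g.support, 1 ≤ j ∧ j ≤ m) ∧ g ∉ U ∧ g ≤ v := by
  rw [mem_IU, support_mono]
  simp

lemma mono_mem_SRideal {K : Type} [Field K] {n : ℕ} {Γ : Finset (Finset ℕ)} {v : Mon} :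
    mono K v ∈ SRideal K n Γ ↔ ∃ S : Finset ℕ, S ⊆ Finset.Icc 1 n ∧ S ∉ Γ ∧ sqf S ≤ v := by
  rw [mem_SRideal, support_mono]
  simp

lemma wordMon_skip (w : ℕ → ℕ) (j e : ℕ) :
    wordMon (j + 1 + e) w =
      wordMon (j + e) (fun t => if t < j then w t else w (t + 1)) + Finsupp.single (w j) 1 := by
  induction e with
  | zero =>
    rw [wordMon_succ]
    congr 1
    exact wordMon_congr fun t ht => by simp [show t < j from ht]
  | succ e ih =>
    rw [show j + 1 + (e + 1) = (j + 1 + e) + 1 by ring, wordMon_succ, ih,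
      show j + (e + 1) = (j + e) + 1 by ring, wordMon_succ, if_neg (by omega),
      show j + e + 1 = j + 1 + e by ring]
    abel

section
variable {m : ℕ} {U : Finset Mon}

lemma not_mem_of_initial (hU : IsShiftedOrderIdeal m U) {k l : ℕ} (h : k ≤ l) {w : ℕ → ℕ}
    (hk : wordMon k w ∉ U) : wordMon l w ∉ U :=
  fun hl => hk (hU.2.2.2.1 _ hl _ (wordMon_mono h w))

/-- A monomial outside `U` has an initial subword that is a minimal generator of `I(U)`:
for the shortest initial subword outside `U`, dividing by its largest variable gives an
element of `U`, and dividing by any other variable gives something larger for `≼`. -/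
lemma exists_initial_mem_GSet (K : Type) [Field K] (hU : IsShiftedOrderIdeal m U) {k : ℕ}
    {w : ℕ → ℕ} (hw : WSorted k w) (hwm : ∀ j < k, 1 ≤ w j ∧ w j ≤ m)
    (hk : wordMon k w ∉ U) : ∃ l ≤ k, wordMon l w ∈ GSet K (IU K m U) := by
  have hex : ∃ l, wordMon l w ∉ U := ⟨k, hk⟩
  set l := Nat.find hex with hl
  have hlU : wordMon l w ∉ U := Nat.find_spec hex
  have hlk : l ≤ k := Nat.find_min' hex hk
  have hmin : ∀ j < l, wordMon j w ∈ U := fun j hj => by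
    simpa using Nat.find_min hex hj
  refine ⟨l, hlk, ?_, ?_⟩
  · refine mono_mem_IU.2 ⟨_, ?_, hlU, le_rfl⟩
    intro i hi
    obtain ⟨j, hj, rfl⟩ := mem_support_wordMon.1 hi
    exact hwm j (by omega)
  · intro i hi hmem
    obtain ⟨g, -, hgU, hg⟩ := mono_mem_IU.1 hmem
    refine hgU (hU.2.2.2.1 _ ?_ _ hg)
    obtain ⟨j, hj, rfl⟩ := mem_support_wordMon.1 hi
    obtain ⟨e, he⟩ : ∃ e, l = j + 1 + e := ⟨l - (j + 1), by omega⟩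
    rw [he, wordMon_skip, add_tsub_cancel_right]
    refine hU.2.2.2.2 (wordMon (j + e) w) (hmin _ (by omega)) _ (prec_wordMon ?_ ?_ ?_) ?_
    · intro a b hab hb
      exact hw a b hab (by omega)
    · intro a b hab hb
      dsimp only
      split_ifs
      · exact hw _ _ (by omega) (by omega)
      · exact hw _ _ (by omega) (by omega)
      · omega
      · exact hw _ _ (by omega) (by omega)
    · intro a ha
      split_ifs
      · exact le_rfl
      · exact hw _ _ (by omega) (by omega)
    · intro i hi
      obtain ⟨t, ht, rfl⟩ := mem_support_wordMon.1 hi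
      split_ifs
      · exact hwm _ (by omega)
      · exact hwm _ (by omega)

end

/-- The support of the shift of a word outside `U` is not a face of `B_d(U)`. -/
lemma word_not_face {n d : ℕ} (hn : d < n) {U : Finset Mon}
    (hU : IsShiftedOrderIdeal (n - d - 1) U) {k : ℕ} {w : ℕ → ℕ} (hw : WSorted k w)
    (hwm : ∀ j < k, 1 ≤ w j ∧ w j ≤ n - d - 1) (hk : wordMon k w ∉ U) :
    (Finset.range k).image (fun j => w j + 2 * j) ∉ squeezedBall n d U := by
  intro hmem
  obtain ⟨u, hu, hsub⟩ := mem_squeezedBall.1 hmem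
  obtain ⟨h1, h2⟩ := compare_of_subset_Fface (u := u) hn hw (fun j hj => (hwm j hj).2)
    fun j hj => hsub (Finset.mem_image_of_mem _ (Finset.mem_range.2 hj))
  have hpre : wordMon k (idx u) ∈ U := by
    refine hU.2.2.2.1 u hu _ ?_
    conv_rhs => rw [← wordMon_idx u]
    exact wordMon_mono h1 _
  refine hk (hU.2.2.2.2 _ hpre _ (prec_wordMon ?_ hw h2) ?_)
  · intro a b hab hb
    exact wSorted_idx u a b hab (by omega)
  · intro i hi
    obtain ⟨j, hj, rfl⟩ := mem_support_wordMon.1 hi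
    exact hwm j hj

lemma injOn_shift {k : ℕ} {w : ℕ → ℕ} (hw : WSorted k w) :
    Set.InjOn (fun j => w j + 2 * j) (Set.Iio k) := by
  intro a ha b hb hab
  simp only [Set.mem_Iio] at ha hb hab
  rcases lt_trichotomy a b with h | h | h
  · have := hw a b h.le hb
    omega
  · exact h
  · have := hw b a h.le ha
    omega

/-- The shifted monomial of a word outside `U` lies in the Stanley–Reisner ideal, as long as
the word is short enough for the shifted indices to stay in `[n]`. -/
lemma shift_mem_SRideal (K : Type) [Field K] {n d : ℕ} (hn : d < n) {U : Finset Mon}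
    (hU : IsShiftedOrderIdeal (n - d - 1) U) {k : ℕ} {w : ℕ → ℕ} (hw : WSorted k w)
    (hkd : k ≤ (d + 1) / 2 + 1)
    (hwm : ∀ j < k, 1 ≤ w j ∧ w j ≤ n - d - 1) (hk : wordMon k w ∉ U) :
    mono K (wordMon k fun j => w j + 2 * j) ∈ SRideal K n (squeezedBall n d U) := by
  refine mono_mem_SRideal.2 ⟨_, ?_, word_not_face hn hU hw hwm hk, ?_⟩
  · intro x hx
    obtain ⟨j, hj, rfl⟩ := Finset.mem_image.1 hx
    have hj := Finset.mem_range.1 hj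
    have := hwm j hj
    rw [Finset.mem_Icc]
    omega
  · rw [wordMon_eq_sqf (injOn_shift hw)]

lemma degMon_le_of_mem_GSet {K : Type} [Field K] {m D : ℕ} {U : Finset Mon}
    (hU : IsShiftedOrderIdeal m U) (hdeg : ∀ u ∈ U, degMon u ≤ D) {w : Mon}
    (hw : w ∈ GSet K (IU K m U)) :
    w ∉ U ∧ (∀ j ∈ w.support, 1 ≤ j ∧ j ≤ m) ∧ degMon w ≤ D + 1 := by
  obtain ⟨h1, h2⟩ := hw
  obtain ⟨g, hgm, hgU, hgw⟩ := mono_mem_IU.1 h1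
  have hgw' : g = w := by
    by_contra hne
    obtain ⟨i, hi⟩ : ∃ i, g i < w i := by
      by_contra hcon
      push Not at hcon
      exact hne (le_antisymm hgw hcon)
    refine h2 i (by simp; omega) (mono_mem_IU.2 ⟨g, hgm, hgU, ?_⟩)
    intro j
    have := hgw j
    rw [Finsupp.tsub_apply, Finsupp.single_apply]
    split_ifs with h
    · subst h; omega
    · omega
  subst hgw'
  refine ⟨hgU, hgm, ?_⟩
  have hne : g ≠ 0 := fun h => hgU (h ▸ hU.1)
  obtain ⟨i, hi⟩ := Finsupp.support_nonempty_iff.2 hne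
  have hmemU : g - Finsupp.single i 1 ∈ U := by
    by_contra hcon
    refine h2 i hi (mono_mem_IU.2 ⟨_, ?_, hcon, le_rfl⟩)
    intro j hj
    refine hgm j ?_
    rw [Finsupp.mem_support_iff, Finsupp.tsub_apply] at hj
    rw [Finsupp.mem_support_iff]
    omega
  have hle : Finsupp.single i 1 ≤ g := by
    rw [Finsupp.single_le_iff]
    exact Nat.one_le_iff_ne_zero.2 (Finsupp.mem_support_iff.1 hi)
  have := hdeg _ hmemU
  rw [← tsub_add_cancel_of_le hle, degMon_add, degMon_single]
  omega

lemma idx_mem_support (u : Mon) {j : ℕ} (hj : j < degMon u) : idx u j ∈ u.support := by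
  have : idx u j ∈ (wordMon (degMon u) (idx u)).support := mem_support_wordMon.2 ⟨j, hj, rfl⟩
  rwa [wordMon_idx] at this

/-- The first half of the result: `I_{B_d(U)} = α²(I(U))`. A non-face contains the shift of its
greedy word, and that word is not in `U`. -/
theorem SRideal_eq_sigmaIdeal (K : Type) [Field K] {n d : ℕ} (hn : d < n) {U : Finset Mon}
    (hU : IsShiftedOrderIdeal (n - d - 1) U) (hdeg : ∀ u ∈ U, degMon u ≤ (d + 1) / 2) :
    SRideal K n (squeezedBall n d U)
      = sigmaIdeal K (alphaMap fun j => 2 * j) (IU K (n - d - 1) U) := by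
  apply le_antisymm
  · refine Ideal.span_le.2 ?_
    rintro _ ⟨S, hS, hSΓ, rfl⟩
    obtain ⟨k, w, hw, hwm, hwS, hcov⟩ := exists_greedy_word (n - d - 1) S
      fun s hs => (Finset.mem_Icc.1 (hS hs)).1
    have hkU : wordMon k w ∉ U := by
      intro hmem
      refine hSΓ (mem_squeezedBall.2 ⟨_, hmem, ?_⟩)
      intro s hs
      rw [mem_Fface, degMon_wordMon]
      rcases hcov s hs with ⟨j, hj, h⟩ | h
      · left
        exact ⟨j, hj, by rwa [idx_wordMon hw hj]⟩
      · right
        have := Finset.mem_Icc.1 (hS hs)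
        omega
    obtain ⟨l, hlk, hl⟩ := exists_initial_mem_GSet K hU hw hwm hkU
    have hmem : mono K (alphaMap (fun j => 2 * j) (wordMon l w)) ∈
        sigmaIdeal K (alphaMap fun j => 2 * j) (IU K (n - d - 1) U) :=
      Ideal.subset_span ⟨_, hl, rfl⟩
    rw [alphaMap_wordMon _ fun i j hij hj => hw i j hij (by omega)] at hmem
    refine mem_of_le hmem ((wordMon_mono hlk _).trans ?_)
    rw [wordMon_eq_sqf (injOn_shift hw)]
    intro i
    rw [sqf_apply, sqf_apply]
    split_ifs with h1 h2
    · exact le_rfl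
    · obtain ⟨j, hj, rfl⟩ := Finset.mem_image.1 h1
      exact absurd (hwS j (Finset.mem_range.1 hj)) h2
    · exact Nat.zero_le _
    · exact le_rfl
  · refine Ideal.span_le.2 ?_
    rintro _ ⟨w, hw, rfl⟩
    obtain ⟨h1, h2, h3⟩ := degMon_le_of_mem_GSet hU hdeg hw
    have := shift_mem_SRideal K hn hU (wSorted_idx w) h3
      (fun j hj => h2 _ (idx_mem_support w hj)) (by rwa [wordMon_idx])
    rw [← alphaMap_wordMon _ (wSorted_idx w), wordMon_idx] at this
    exact this

/-! ### Comparison of the numbers of standard monomials -/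

/-- The monomials of degree at most `T` in the variables `x_0, …, x_N`. -/
def box (N T : ℕ) : Set Mon := {u | degMon u ≤ T ∧ ∀ j ∈ u.support, j ≤ N}

lemma le_degMon (u : Mon) (i : ℕ) : u i ≤ degMon u := by
  by_cases hi : i ∈ u.support
  · exact Finset.single_le_sum (f := fun i => u i) (fun _ _ => Nat.zero_le _) hi
  · rw [Finsupp.notMem_support_iff.1 hi]
    exact Nat.zero_le _

lemma box_finite (N T : ℕ) : (box N T).Finite := by
  refine (Set.finite_Iic (∑ j ∈ Finset.range (N + 1), Finsupp.single j T : Mon)).subset ?_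
  rintro u ⟨h1, h2⟩ i
  rw [Finsupp.finsetSum_apply]
  by_cases hi : i ∈ u.support
  · have := h2 i hi
    refine ((le_degMon u i).trans h1).trans ?_
    have := Finset.single_le_sum (f := fun j => (Finsupp.single j T : Mon) i)
      (fun _ _ => Nat.zero_le _) (Finset.mem_range.2 (Nat.lt_succ_of_le this))
    simpa using this
  · rw [Finsupp.notMem_support_iff.1 hi]
    exact Nat.zero_le _

/-- The part of a monomial in the variables `x_1, …, x_m`. -/
def lowPart (m : ℕ) (v : Mon) : Mon := v.filter fun i => 1 ≤ i ∧ i ≤ m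

/-- The part of a monomial in the variables other than `x_1, …, x_m`. -/
def highPart (m : ℕ) (v : Mon) : Mon := v.filter fun i => ¬(1 ≤ i ∧ i ≤ m)

/-- The map that sends `{m + 1, …, n}`, where `m = n - d - 1`, increasingly onto the facet
`F_d(u)` and fixes every index outside `[n]`. -/
def facetMap (m : ℕ) (u : Mon) (x : ℕ) : ℕ :=
  if m + 1 ≤ x ∧ x < m + 1 + 2 * degMon u then idx u ((x - (m + 1)) / 2) + (x - (m + 1)) else x

/-- For a monomial `v = u · q`, with `u` in `x_1, …, x_m` and `q` in the other variables, the
product of the lower ends `x_{i_j + 2(j-1)}` of the pairs of `F_d(u)` with the image of `q`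
under the relabelling of `{m + 1, …, n}` by `F_d(u)`. -/
def transfer (m : ℕ) (v : Mon) : Mon :=
  wordMon (degMon (lowPart m v)) (fun j => idx (lowPart m v) j + 2 * j) +
    Finsupp.mapDomain (facetMap m (lowPart m v)) (highPart m v)

lemma low_add_high (m : ℕ) (v : Mon) : lowPart m v + highPart m v = v :=
  Finsupp.filter_add_filter_not v _

lemma mem_support_low {m : ℕ} {v : Mon} {i : ℕ} (h : i ∈ (lowPart m v).support) :
    1 ≤ i ∧ i ≤ m := by
  unfold lowPart at h
  rw [Finsupp.support_filter, Finset.mem_filter] at h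
  exact h.2

lemma mem_support_high {m : ℕ} {v : Mon} {i : ℕ} (h : i ∈ (highPart m v).support) :
    i ∈ v.support ∧ ¬(1 ≤ i ∧ i ≤ m) := by
  unfold highPart at h
  rw [Finsupp.support_filter, Finset.mem_filter] at h
  exact h

lemma degMon_mapDomain (f : ℕ → ℕ) (u : Mon) : degMon (Finsupp.mapDomain f u) = degMon u :=
  Finsupp.sum_mapDomain_index (fun _ => rfl) (fun _ _ _ => rfl)

lemma degMon_transfer (m : ℕ) (v : Mon) : degMon (transfer m v) = degMon v := by
  conv_rhs => rw [← low_add_high m v]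
  rw [transfer, degMon_add, degMon_wordMon, degMon_mapDomain, degMon_add]

lemma idx_low {m : ℕ} {v : Mon} {j : ℕ} (hj : j < degMon (lowPart m v)) :
    1 ≤ idx (lowPart m v) j ∧ idx (lowPart m v) j ≤ m :=
  mem_support_low (idx_mem_support _ hj)

lemma mem_support_transfer {m : ℕ} {v : Mon} {x : ℕ} : x ∈ (transfer m v).support →
    (∃ j < degMon (lowPart m v), idx (lowPart m v) j + 2 * j = x) ∨
      ∃ y ∈ v.support, ¬(1 ≤ y ∧ y ≤ m) ∧ facetMap m (lowPart m v) y = x := by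
  intro h
  rcases Finset.mem_union.1 (Finsupp.support_add h) with h | h
  · exact Or.inl (mem_support_wordMon.1 h)
  · obtain ⟨y, hy, rfl⟩ := Finset.mem_image.1 (Finsupp.mapDomain_support h)
    obtain ⟨h1, h2⟩ := mem_support_high hy
    exact Or.inr ⟨y, h1, h2, rfl⟩

lemma facetMap_injOn (m : ℕ) (v : Mon) :
    Set.InjOn (facetMap m (lowPart m v)) {x | ¬(1 ≤ x ∧ x ≤ m)} := by
  have hlt : ∀ x y, ¬(1 ≤ x ∧ x ≤ m) → ¬(1 ≤ y ∧ y ≤ m) → x < y →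
      facetMap m (lowPart m v) x ≠ facetMap m (lowPart m v) y := by
    intro x y hx hy hxy
    unfold facetMap
    split_ifs with h1 h2 h2
    · have := wSorted_idx (lowPart m v) ((x - (m + 1)) / 2) ((y - (m + 1)) / 2)
        (by omega) (by omega)
      omega
    · have := idx_low (v := v) (m := m) (j := (x - (m + 1)) / 2) (by omega)
      omega
    · have := idx_low (v := v) (m := m) (j := (y - (m + 1)) / 2) (by omega)
      omega
    · omega
  intro x hx y hy hxy
  simp only [Set.mem_ofPred_eq] at hx hy
  rcases lt_trichotomy x y with h | h | h
  · exact absurd hxy (hlt x y hx hy h)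
  · exact h
  · exact absurd hxy.symm (hlt y x hy hx h)

section
variable {n d : ℕ} {v : Mon}

lemma support_transfer_le (hn : d < n) (hv : degMon (lowPart (n - d - 1) v) ≤ (d + 1) / 2)
    {N : ℕ} (hN : n ≤ N) (hvN : ∀ j ∈ v.support, j ≤ N) :
    ∀ j ∈ (transfer (n - d - 1) v).support, j ≤ N := by
  intro x hx
  rcases mem_support_transfer hx with ⟨j, hj, rfl⟩ | ⟨y, hy, hym, rfl⟩
  · have := idx_low hj
    omega
  · have := hvN y hy
    unfold facetMap
    split_ifs with h
    · have := idx_low (v := v) (m := n - d - 1) (j := (y - (n - d - 1 + 1)) / 2) (by omega)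
      omega
    · exact this

lemma support_transfer_face (hn : d < n) {x : ℕ}
    (hx : x ∈ (transfer (n - d - 1) v).support) (h1 : 1 ≤ x) (hxn : x ≤ n) :
    x ∈ Fface n d (lowPart (n - d - 1) v) := by
  rw [mem_Fface]
  rcases mem_support_transfer hx with ⟨j, hj, rfl⟩ | ⟨y, hy, hym, rfl⟩
  · exact Or.inl ⟨j, hj, Or.inl rfl⟩
  · unfold facetMap at *
    split_ifs at * with h
    · refine Or.inl ⟨(y - (n - d - 1 + 1)) / 2, by omega, by omega⟩
    · right
      omega

lemma mem_support_transfer_of_lt {j : ℕ} {m : ℕ} (hj : j < degMon (lowPart m v)) :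
    idx (lowPart m v) j + 2 * j ∈ (transfer m v).support := by
  have : idx (lowPart m v) j + 2 * j ∈ (wordMon (degMon (lowPart m v))
      (fun j => idx (lowPart m v) j + 2 * j)).support := mem_support_wordMon.2 ⟨j, hj, rfl⟩
  rw [Finsupp.mem_support_iff] at this ⊢
  unfold transfer
  rw [Finsupp.add_apply]
  omega

lemma transfer_inj_aux (hn : d < n) {v' : Mon}
    (hv : degMon (lowPart (n - d - 1) v) ≤ (d + 1) / 2)
    (h : transfer (n - d - 1) v = transfer (n - d - 1) v') :
    degMon (lowPart (n - d - 1) v) ≤ degMon (lowPart (n - d - 1) v') ∧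
      ∀ j < degMon (lowPart (n - d - 1) v),
        idx (lowPart (n - d - 1) v') j ≤ idx (lowPart (n - d - 1) v) j := by
  refine compare_of_subset_Fface hn (wSorted_idx _) (fun j hj => (idx_low hj).2) ?_
  intro j hj
  have hidx := idx_low hj
  refine support_transfer_face hn ?_ (by omega) (by omega)
  rw [← h]
  exact mem_support_transfer_of_lt hj

lemma transfer_inj (hn : d < n) {v' : Mon}
    (hv : degMon (lowPart (n - d - 1) v) ≤ (d + 1) / 2)
    (hv' : degMon (lowPart (n - d - 1) v') ≤ (d + 1) / 2)
    (h : transfer (n - d - 1) v = transfer (n - d - 1) v') : v = v' := by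
  obtain ⟨h1, h2⟩ := transfer_inj_aux hn hv h
  obtain ⟨h3, h4⟩ := transfer_inj_aux hn hv' h.symm
  have hlow : lowPart (n - d - 1) v = lowPart (n - d - 1) v' := by
    rw [← wordMon_idx (lowPart (n - d - 1) v), ← wordMon_idx (lowPart (n - d - 1) v'),
      le_antisymm h1 h3]
    exact wordMon_congr fun j hj => le_antisymm (h4 j hj) (h2 j (by omega))
  unfold transfer at h
  rw [← hlow] at h
  have hhigh := Finsupp.mapDomain_injOn _ (facetMap_injOn (n - d - 1) v)
    (show highPart (n - d - 1) v ∈ _ from fun x hx => (mem_support_high hx).2)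
    (show highPart (n - d - 1) v' ∈ _ from fun x hx => (mem_support_high hx).2)
    (add_left_cancel h)
  rw [← low_add_high (n - d - 1) v, ← low_add_high (n - d - 1) v', hlow, hhigh]

end

/-- Numerically, `S/I_{B_d(U)}` is at least as large as `S/I(U)`: the intervals
`[{i_1, i_2 + 2, …, i_k + 2(k-1)}, F_d(u)]`, `u ∈ U`, are disjoint inside `B_d(U)`, so that
`transfer` is an injection. -/
lemma card_standard_le (K : Type) [Field K] {n d : ℕ} (hn : d < n) {U : Finset Mon}
    (hdeg : ∀ u ∈ U, degMon u ≤ (d + 1) / 2) {N T : ℕ} (hN : n ≤ N) :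
    ((box_finite N T).toFinset.filter fun v => mono K v ∉ IU K (n - d - 1) U).card ≤
      ((box_finite N T).toFinset.filter
        fun v => mono K v ∉ SRideal K n (squeezedBall n d U)).card := by
  have hlow : ∀ v, mono K v ∉ IU K (n - d - 1) U → lowPart (n - d - 1) v ∈ U := by
    intro v hv
    by_contra hcon
    refine hv (mono_mem_IU.2 ⟨_, fun j hj => mem_support_low hj, hcon, ?_⟩)
    conv_rhs => rw [← low_add_high (n - d - 1) v]
    exact le_self_add
  refine Finset.card_le_card_of_injOn (transfer (n - d - 1)) ?_ ?_
  · intro v hv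
    obtain ⟨⟨h1, h2⟩, h3⟩ : v ∈ box N T ∧ _ := by simpa using hv
    have hvU := hlow v h3
    simp only [Finset.coe_filter, Set.Finite.mem_toFinset, Set.mem_ofPred_eq]
    refine ⟨⟨by rwa [degMon_transfer], support_transfer_le hn (hdeg _ hvU) hN h2⟩, ?_⟩
    intro hmem
    obtain ⟨S, hS, hSΓ, hle⟩ := mono_mem_SRideal.1 hmem
    refine hSΓ (mem_squeezedBall.2 ⟨_, hvU, fun x hx => ?_⟩)
    have hxn := Finset.mem_Icc.1 (hS hx)
    refine support_transfer_face hn ?_ hxn.1 hxn.2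
    have := hle x
    rw [sqf_apply, if_pos hx] at this
    rw [Finsupp.mem_support_iff]
    omega
  · intro v hv v' hv' h
    obtain ⟨-, h3⟩ : v ∈ box N T ∧ _ := by simpa using hv
    obtain ⟨-, h3'⟩ : v' ∈ box N T ∧ _ := by simpa using hv'
    exact transfer_inj hn (hdeg _ (hlow v h3)) (hdeg _ (hlow v' h3')) h

/-! ### Generic matrices and products of linear forms -/

section
variable {K : Type} [Field K] {n : ℕ}

/-- Every minor of `φ` on an initial segment of rows is nonzero. -/
def InitialMinorsNeZero (φ : Matrix (Fin n) (Fin n) K) : Prop :=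
  ∀ (r : ℕ) (hr : r ≤ n) (g : Fin r → Fin n), Function.Injective g →
    (Matrix.of fun a b => φ (Fin.castLE hr a) (g b)).det ≠ 0

/-- The minor of the generic matrix on rows `1, …, r` and columns `g`. -/
def genericMinor (K : Type) [Field K] {n r : ℕ} (hr : r ≤ n) (g : Fin r → Fin n) :
    MvPolynomial (Fin n × Fin n) K :=
  (Matrix.of fun a b => MvPolynomial.X (Fin.castLE hr a, g b)).det

/-- The product of all minors of the generic matrix on initial segments of rows. -/
def minorPoly (K : Type) [Field K] (n : ℕ) : MvPolynomial (Fin n × Fin n) K :=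
  ∏ r : Fin (n + 1), ∏ g : Fin r ↪ Fin n, genericMinor K (Nat.lt_succ_iff.1 r.2) g

lemma evalMat_genericMinor {r : ℕ} (hr : r ≤ n) (g : Fin r → Fin n)
    (φ : Matrix (Fin n) (Fin n) K) :
    evalMat K n φ (genericMinor K hr g) =
      (Matrix.of fun a b => φ (Fin.castLE hr a) (g b)).det := by
  unfold evalMat genericMinor
  rw [RingHom.map_det]
  congr 1
  ext a b
  simp

lemma genericMinor_ne_zero {r : ℕ} (hr : r ≤ n) {g : Fin r → Fin n}
    (hg : Function.Injective g) : genericMinor K hr g ≠ 0 := by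
  intro h
  -- a partial permutation matrix on which the minor takes the value `1`
  let φ : Matrix (Fin n) (Fin n) K := fun i j => if ∃ a, i = Fin.castLE hr a ∧ j = g a then 1 else 0
  have h1 := evalMat_genericMinor hr g φ
  have h2 : (Matrix.of fun a b => φ (Fin.castLE hr a) (g b)) = 1 := by
    ext a b
    simp only [Matrix.of_apply, φ, Matrix.one_apply]
    congr 1
    apply propext
    constructor
    · rintro ⟨a', h3, h4⟩
      rw [hg h4]
      exact Fin.castLE_injective hr h3
    · rintro rfl
      exact ⟨a, rfl, rfl⟩
  rw [h, h2, Matrix.det_one] at h1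
  simp [evalMat] at h1

lemma minorPoly_ne_zero : minorPoly K n ≠ 0 :=
  Finset.prod_ne_zero_iff.2 fun _ _ => Finset.prod_ne_zero_iff.2 fun g _ =>
    genericMinor_ne_zero _ g.injective

lemma initialMinorsNeZero_of_eval {φ : Matrix (Fin n) (Fin n) K}
    (h : evalMat K n φ (minorPoly K n) ≠ 0) : InitialMinorsNeZero φ := by
  intro r hr g hg
  rw [← evalMat_genericMinor]
  unfold minorPoly evalMat at h
  rw [map_prod] at h
  have h1 := Finset.prod_ne_zero_iff.1 h ⟨r, Nat.lt_succ_of_le hr⟩ (Finset.mem_univ _)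
  rw [map_prod] at h1
  exact Finset.prod_ne_zero_iff.1 h1 ⟨g, hg⟩ (Finset.mem_univ _)

/-- Over an infinite field, a nonzero polynomial in the matrix entries does not vanish at some
invertible matrix. -/
lemma exists_isUnit_det_eval_ne_zero [Infinite K] {P : MvPolynomial (Fin n × Fin n) K}
    (hP : P ≠ 0) : ∃ φ : Matrix (Fin n) (Fin n) K, IsUnit φ.det ∧ evalMat K n φ P ≠ 0 := by
  have hne : (Matrix.mvPolynomialX (Fin n) (Fin n) K).det * P ≠ 0 :=
    mul_ne_zero (Matrix.det_mvPolynomialX_ne_zero _ _) hP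
  obtain ⟨x, hx⟩ : ∃ x : Fin n × Fin n → K, MvPolynomial.eval x
      ((Matrix.mvPolynomialX (Fin n) (Fin n) K).det * P) ≠ 0 := by
    by_contra hcon
    push Not at hcon
    exact hne (MvPolynomial.funext fun x => by rw [hcon x, map_zero])
  rw [map_mul] at hx
  refine ⟨fun i j => x (i, j), ?_, ?_⟩
  · rw [isUnit_iff_ne_zero]
    have := left_ne_zero_of_mul hx
    rw [RingHom.map_det] at this
    have h1 : (fun i j => x (i, j)) =
        (MvPolynomial.eval x).mapMatrix (Matrix.mvPolynomialX (Fin n) (Fin n) K) := by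
      ext i j
      simp
    exact h1 ▸ this
  · exact right_ne_zero_of_mul hx

variable (φ : Matrix (Fin n) (Fin n) K)

lemma gAct_X {j : ℕ} (h1 : 1 ≤ j) (h2 : j ≤ n) : gAct K n φ (MvPolynomial.X j) =
    ∑ i : Fin n, MvPolynomial.C (φ i ⟨j - 1, by omega⟩) * MvPolynomial.X ((i : ℕ) + 1) := by
  unfold gAct
  rw [MvPolynomial.aeval_X, dif_pos ⟨h1, h2⟩]

lemma gAct_X_of_not {j : ℕ} (h : ¬(1 ≤ j ∧ j ≤ n)) :
    gAct K n φ (MvPolynomial.X j) = MvPolynomial.X j := by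
  unfold gAct
  rw [MvPolynomial.aeval_X, dif_neg h]

lemma gAct_X_succ (j : Fin n) : gAct K n φ (MvPolynomial.X ((j : ℕ) + 1)) =
    ∑ i : Fin n, MvPolynomial.C (φ i j) * MvPolynomial.X ((i : ℕ) + 1) := by
  rw [gAct_X φ (by omega) (by omega)]
  rfl

lemma gAct_gAct (ψ : Matrix (Fin n) (Fin n) K) (p : MvPolynomial ℕ K) :
    gAct K n φ (gAct K n ψ p) = gAct K n (φ * ψ) p := by
  have : (gAct K n φ).comp (gAct K n ψ) = gAct K n (φ * ψ) := by
    apply MvPolynomial.algHom_ext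
    intro j
    rw [AlgHom.comp_apply]
    by_cases h : 1 ≤ j ∧ j ≤ n
    · obtain ⟨b, rfl⟩ : ∃ b : Fin n, j = (b : ℕ) + 1 := ⟨⟨j - 1, by omega⟩, by simp; omega⟩
      rw [gAct_X_succ, gAct_X_succ, map_sum]
      have hC : ∀ a : K, gAct K n φ (MvPolynomial.C a) = MvPolynomial.C a :=
        fun a => (gAct K n φ).commutes a
      simp_rw [map_mul, hC, gAct_X_succ, Finset.mul_sum, ← mul_assoc, ← MvPolynomial.C_mul]
      rw [Finset.sum_comm]
      refine Finset.sum_congr rfl fun i _ => ?_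
      rw [← Finset.sum_mul, ← map_sum, Matrix.mul_apply]
      congr 2
      exact Finset.sum_congr rfl fun k _ => mul_comm _ _
    · rw [gAct_X_of_not _ h, gAct_X_of_not _ h, gAct_X_of_not _ h]
  rw [← this]
  rfl

lemma gAct_one (p : MvPolynomial ℕ K) : gAct K n 1 p = p := by
  have : gAct K n (1 : Matrix (Fin n) (Fin n) K) = AlgHom.id K _ := by
    apply MvPolynomial.algHom_ext
    intro j
    by_cases h : 1 ≤ j ∧ j ≤ n
    · obtain ⟨b, rfl⟩ : ∃ b : Fin n, j = (b : ℕ) + 1 := ⟨⟨j - 1, by omega⟩, by simp; omega⟩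
      rw [gAct_X_succ, Finset.sum_eq_single b]
      · simp
      · intro i _ hib
        simp [Matrix.one_apply_ne hib]
      · simp
    · rw [gAct_X_of_not _ h]
      rfl
  rw [this]
  rfl

/-- The ideal generated by the variables `x_i` with `i > r`. -/
def tailIdeal (K : Type) [Field K] (r : ℕ) : Ideal (MvPolynomial ℕ K) :=
  Ideal.span (MvPolynomial.X '' Set.Ioi r)

lemma X_mem_tailIdeal {r i : ℕ} (h : r < i) :
    (MvPolynomial.X i : MvPolynomial ℕ K) ∈ tailIdeal K r :=
  Ideal.subset_span ⟨i, h, rfl⟩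

variable {φ}

/-- Modulo `x_{r+1}, x_{r+2}, …`, any `r` distinct columns of `φ` give linear forms that span
all linear forms in `x_1, …, x_r`. -/
lemma exists_combination (hφ : InitialMinorsNeZero φ) {r : ℕ} (hr : r ≤ n) {g : Fin r → Fin n}
    (hg : Function.Injective g) (s : Fin r) : ∃ c : Fin r → K,
      MvPolynomial.X ((s : ℕ) + 1) -
        ∑ b, MvPolynomial.C (c b) * gAct K n φ (MvPolynomial.X ((g b : ℕ) + 1)) ∈
      tailIdeal K r := by
  set A : Matrix (Fin r) (Fin r) K := Matrix.of fun a b => φ (Fin.castLE hr a) (g b) with hA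
  have hdet : IsUnit A.det := isUnit_iff_ne_zero.2 (hφ r hr g hg)
  set c : Fin r → K := fun b => A⁻¹ b s
  have hc : ∀ a : Fin r, ∑ b, φ (Fin.castLE hr a) (g b) * c b = if a = s then 1 else 0 := by
    intro a
    have := congrFun (congrFun (Matrix.mul_nonsing_inv A hdet) a) s
    rw [Matrix.mul_apply, Matrix.one_apply] at this
    exact this
  refine ⟨c, ?_⟩
  have h1 : ∑ b, MvPolynomial.C (c b) * gAct K n φ (MvPolynomial.X ((g b : ℕ) + 1)) =
      ∑ i : Fin n, MvPolynomial.C (∑ b, φ i (g b) * c b) * MvPolynomial.X ((i : ℕ) + 1) := by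
    simp_rw [gAct_X_succ, Finset.mul_sum, map_sum, Finset.sum_mul]
    rw [Finset.sum_comm]
    refine Finset.sum_congr rfl fun i _ => Finset.sum_congr rfl fun b _ => ?_
    rw [map_mul]
    ring
  have h2 : (MvPolynomial.X ((s : ℕ) + 1) : MvPolynomial ℕ K) =
      ∑ i : Fin n, MvPolynomial.C (if i = Fin.castLE hr s then 1 else 0) *
        MvPolynomial.X ((i : ℕ) + 1) := by
    rw [Finset.sum_eq_single (Fin.castLE hr s)]
    · simp
    · intro i _ hi
      simp [hi]
    · simp
  rw [h1, h2, ← Finset.sum_sub_distrib]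
  refine Ideal.sum_mem _ fun i _ => ?_
  by_cases hi : (i : ℕ) < r
  · have h3 := hc ⟨i, hi⟩
    have h4 : Fin.castLE hr ⟨i, hi⟩ = i := rfl
    have h5 : (i = Fin.castLE hr s) ↔ ((⟨i, hi⟩ : Fin r) = s) := by
      rw [Fin.ext_iff, Fin.ext_iff]
      rfl
    rw [h4] at h3
    rw [h3]
    simp only [h5, sub_self, Submodule.zero_mem]
  · rw [← sub_mul]
    exact Ideal.mul_mem_left _ _ (X_mem_tailIdeal (by omega))

/-- The product `ℓ_{c 0} ℓ_{c 1 + 2} ⋯ ℓ_{c (k-1) + 2(k-1)}`, where `ℓ_j` is the image of `x_j`: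
the image of `α²` of the word `c`. -/
def shiftProd (φ : Matrix (Fin n) (Fin n) K) (k : ℕ) (c : ℕ → ℕ) : MvPolynomial ℕ K :=
  ∏ j ∈ Finset.range k, gAct K n φ (MvPolynomial.X (c j + 2 * j))

/-- The span of the products `shiftProd φ k c` over all words `c ≼ w`. -/
def lowerSpan (φ : Matrix (Fin n) (Fin n) K) (k : ℕ) (w : ℕ → ℕ) :
    Submodule K (MvPolynomial ℕ K) :=
  Submodule.span K (shiftProd φ k '' {c | WSorted k c ∧ ∀ j < k, 1 ≤ c j ∧ c j ≤ w j})

lemma shiftProd_update {p q i : ℕ} {c : ℕ → ℕ} (hq : q < p) :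
    gAct K n φ (MvPolynomial.X (i + 2 * q)) * shiftProd φ p c =
      gAct K n φ (MvPolynomial.X (c q + 2 * q)) * shiftProd φ p (Function.update c q i) := by
  unfold shiftProd
  rw [← Finset.mul_prod_erase _ _ (Finset.mem_range.2 hq),
    ← Finset.mul_prod_erase (Finset.range p)
      (fun j => gAct K n φ (MvPolynomial.X (Function.update c q i j + 2 * j)))
      (Finset.mem_range.2 hq)]
  have : ∏ j ∈ (Finset.range p).erase q,
      gAct K n φ (MvPolynomial.X (Function.update c q i j + 2 * j)) =
      ∏ j ∈ (Finset.range p).erase q, gAct K n φ (MvPolynomial.X (c j + 2 * j)) :=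
    Finset.prod_congr rfl fun j hj => by
      rw [Function.update_of_ne (Finset.ne_of_mem_erase hj)]
  rw [this, Function.update_self]
  ring

/-- Key step: modulo the variables after `x_r`, `r = w p`, the span attached to `w 0 ⋯ w p`
contains all products of linear forms with the span attached to `w 0 ⋯ w (p-1)`.
For a word `c` and `i ≤ r` let `q i` be the position at which `i` can be inserted into `c`. The
forms `ℓ_{i + 2 q(i)}`, `i = 1, …, r`, come from distinct columns of `φ`, hence span. If `q i = p`,
then multiplying by `ℓ_{i + 2p}` appends the letter `i` to `c`; otherwise
`ℓ_{i + 2 q(i)} · shiftProd c` is a linear form times the product of the smaller word obtained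
from `c` by replacing its letter in position `q i` by `i`. -/
lemma X_mul_shiftProd_mem (hφ : InitialMinorsNeZero φ) {p : ℕ} {w : ℕ → ℕ}
    (hw : WSorted (p + 1) w) (hpn : w p + 2 * p ≤ n) :
    ∀ (M : ℕ) (c : ℕ → ℕ), ∑ j ∈ Finset.range p, c j = M → WSorted p c →
      (∀ j < p, 1 ≤ c j ∧ c j ≤ w j) → ∀ s, 1 ≤ s →
      MvPolynomial.X s * shiftProd φ p c ∈
        lowerSpan φ (p + 1) w ⊔ (tailIdeal K (w p)).restrictScalars K := by
  intro M
  induction M using Nat.strong_induction_on with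
  | _ M ih =>
  intro c hcM hc hcw s hs
  set R := lowerSpan φ (p + 1) w ⊔ (tailIdeal K (w p)).restrictScalars K with hR
  have hQ : ∀ x ∈ tailIdeal K (w p), x ∈ R := fun x hx => Submodule.mem_sup_right hx
  by_cases hsr : w p < s
  · exact hQ _ (Ideal.mul_mem_right _ _ (X_mem_tailIdeal hsr))
  push Not at hsr
  have hex : ∀ i, ∃ q, q ≤ p ∧ (∀ j < q, c j ≤ i) ∧ (q < p → i < c q) := by
    intro i
    have hq : ∃ q, p ≤ q ∨ i < c q := ⟨p, Or.inl le_rfl⟩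
    refine ⟨Nat.find hq, Nat.find_min' hq (Or.inl le_rfl), fun j hj => ?_, fun h => ?_⟩
    · have := Nat.find_min hq hj
      push Not at this
      exact this.2
    · rcases Nat.find_spec hq with h' | h'
      · omega
      · exact h'
  choose q hqp hq1 hq2 using hex
  have hqmono : ∀ i i', i ≤ i' → q i ≤ q i' := by
    intro i i' h
    by_contra hlt
    push Not at hlt
    have h1 := hq1 i _ hlt
    have h2 := hq2 i' (by have := hqp i; omega)
    omega
  let g : Fin (w p) → Fin n := fun b =>
    ⟨(b : ℕ) + 2 * q (b + 1), by have := hqp (b + 1); have := b.2; omega⟩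
  have hg : Function.Injective g := by
    intro a b hab
    have hab' : (a : ℕ) + 2 * q (a + 1) = b + 2 * q (b + 1) := congrArg Fin.val hab
    apply Fin.ext
    rcases le_total (a : ℕ) b with h | h
    · have := hqmono (a + 1) (b + 1) (by omega)
      omega
    · have := hqmono (b + 1) (a + 1) (by omega)
      omega
  -- each form `ℓ_{i + 2 q(i)}` multiplies `shiftProd φ p c` into the target
  have hform : ∀ b : Fin (w p),
      gAct K n φ (MvPolynomial.X ((g b : ℕ) + 1)) * shiftProd φ p c ∈ R := by
    intro b
    set i := (b : ℕ) + 1 with hi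
    have hib : i ≤ w p := b.2
    have hgb : (g b : ℕ) + 1 = i + 2 * q i := by
      show (b : ℕ) + 2 * q i + 1 = _
      omega
    rw [hgb]
    rcases (hqp i).eq_or_lt with hqi | hqi
    · refine Submodule.mem_sup_left (Submodule.subset_span ⟨Function.update c p i, ⟨?_, ?_⟩, ?_⟩)
      · intro a b hab hb
        rcases Nat.lt_succ_iff_lt_or_eq.1 hb with h | rfl
        · rw [Function.update_of_ne (by omega), Function.update_of_ne (by omega)]
          exact hc a b hab h
        · rw [Function.update_self]
          rcases hab.eq_or_lt with rfl | h
          · rw [Function.update_self]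
          · rw [Function.update_of_ne (by omega)]
            exact hq1 i a (by omega)
      · intro j hj
        rcases Nat.lt_succ_iff_lt_or_eq.1 hj with h | rfl
        · rw [Function.update_of_ne (by omega)]
          exact hcw j h
        · rw [Function.update_self]
          omega
      · unfold shiftProd
        rw [Finset.prod_range_succ, Function.update_self, hqi, mul_comm]
        congr 1
        refine Finset.prod_congr rfl fun j hj => ?_
        rw [Function.update_of_ne (by have := Finset.mem_range.1 hj; omega)]
    · have hlt := hq2 i hqi
      rw [shiftProd_update hqi]
      have hcq := hcw _ hqi
      have hwq := hw (q i) p hqi.le (by omega)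
      have hsum : ∑ j ∈ Finset.range p, Function.update c (q i) i j < M := by
        rw [← hcM]
        refine Finset.sum_lt_sum (fun j _ => ?_) ⟨q i, Finset.mem_range.2 hqi, ?_⟩
        · by_cases h : j = q i
          · subst h
            rw [Function.update_self]
            exact hlt.le
          · rw [Function.update_of_ne h]
        · rw [Function.update_self]
          exact hlt
      have hsorted : WSorted p (Function.update c (q i) i) := by
        intro a b hab hb
        by_cases ha : a = q i
        · by_cases hb' : b = q i
          · rw [ha, hb']
          · rw [ha, Function.update_self, Function.update_of_ne hb']
            have := hc (q i) b (by omega) hb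
            omega
        · rw [Function.update_of_ne ha]
          by_cases hb' : b = q i
          · rw [hb', Function.update_self]
            exact hq1 i a (by omega)
          · rw [Function.update_of_ne hb']
            exact hc a b hab hb
      rw [gAct_X φ (by omega) (by omega), Finset.sum_mul]
      refine Submodule.sum_mem _ fun a _ => ?_
      rw [mul_assoc, ← MvPolynomial.smul_eq_C_mul]
      refine Submodule.smul_mem _ _ (ih _ hsum _ rfl hsorted (fun j hj => ?_) _ (by omega))
      by_cases h : j = q i
      · subst h
        rw [Function.update_self]
        omega
      · rw [Function.update_of_ne h]
        exact hcw j hj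
  obtain ⟨a, ha⟩ := exists_combination hφ (by omega : w p ≤ n) hg ⟨s - 1, by omega⟩
  have hs1 : ((⟨s - 1, by omega⟩ : Fin (w p)) : ℕ) + 1 = s := by simp; omega
  rw [hs1] at ha
  have hsplit : MvPolynomial.X s * shiftProd φ p c =
      (MvPolynomial.X s - ∑ b, MvPolynomial.C (a b) *
        gAct K n φ (MvPolynomial.X ((g b : ℕ) + 1))) * shiftProd φ p c +
      ∑ b, a b • (gAct K n φ (MvPolynomial.X ((g b : ℕ) + 1)) * shiftProd φ p c) := by
    simp_rw [MvPolynomial.smul_eq_C_mul, ← mul_assoc]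
    rw [← Finset.sum_mul]
    ring
  rw [hsplit]
  exact Submodule.add_mem _ (hQ _ (Ideal.mul_mem_right _ _ ha))
    (Submodule.sum_mem _ fun b _ => Submodule.smul_mem _ _ (hform b))

end

/-! ### Leading monomials -/

lemma degrevlexLT_irrefl (u : Mon) : ¬ degrevlexLT u u := by
  rintro (h | ⟨-, r, h, -⟩) <;> exact lt_irrefl _ h

lemma degrevlexLT_trans {u v w : Mon} (h1 : degrevlexLT u v) (h2 : degrevlexLT v w) :
    degrevlexLT u w := by
  rcases h1 with h1 | ⟨h1, r, hr, hr'⟩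
  · rcases h2 with h2 | ⟨h2, -⟩
    · exact Or.inl (h1.trans h2)
    · exact Or.inl (h2 ▸ h1)
  · rcases h2 with h2 | ⟨h2, s, hs, hs'⟩
    · exact Or.inl (h1 ▸ h2)
    · refine Or.inr ⟨h1.trans h2, ?_⟩
      rcases lt_trichotomy r s with h | h | h
      · exact ⟨s, by rw [hr' s h]; exact hs, fun t ht => (hr' t (h.trans ht)).trans (hs' t ht)⟩
      · subst h
        exact ⟨r, hs.trans hr, fun t ht => (hr' t ht).trans (hs' t ht)⟩
      · exact ⟨r, by rw [← hs' r h]; exact hr, fun t ht => (hr' t ht).trans (hs' t (h.trans ht))⟩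

lemma degrevlexLT_add {u v : Mon} (h : degrevlexLT u v) (w : Mon) :
    degrevlexLT (u + w) (v + w) := by
  unfold degrevlexLT
  rw [degMon_add, degMon_add]
  rcases h with h | ⟨h1, r, hr, hr'⟩
  · exact Or.inl (by omega)
  · refine Or.inr ⟨by omega, r, ?_, fun t ht => ?_⟩
    · simp only [Finsupp.add_apply]
      omega
    · simp only [Finsupp.add_apply, hr' t ht]

lemma degrevlexLT.degMon_le {u v : Mon} (h : degrevlexLT u v) : degMon u ≤ degMon v := by
  rcases h with h | ⟨h, -⟩ <;> omega

/-- A monomial that involves a variable later than all variables of `u` is smaller than `u`. -/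
lemma degrevlexLT_of_tail {u v : Mon} {r i : ℕ} (hdeg : degMon v ≤ degMon u)
    (hu : ∀ j ∈ u.support, j ≤ r) (hi : r < i) (hv : v i ≠ 0) : degrevlexLT v u := by
  rcases hdeg.lt_or_eq with h | h
  · exact Or.inl h
  refine Or.inr ⟨h, ?_⟩
  have hne : v.support.Nonempty := ⟨i, Finsupp.mem_support_iff.2 hv⟩
  have hle : i ≤ v.support.max' hne := Finset.le_max' _ _ (Finsupp.mem_support_iff.2 hv)
  have hu0 : ∀ t, r < t → u t = 0 := fun t ht => by
    by_contra hcon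
    have := hu t (Finsupp.mem_support_iff.2 hcon)
    omega
  refine ⟨v.support.max' hne, ?_, fun t ht => ?_⟩
  · rw [hu0 _ (by omega)]
    exact Nat.pos_of_ne_zero (Finsupp.mem_support_iff.1 (Finset.max'_mem _ hne))
  · rw [hu0 _ (by omega)]
    by_contra hcon
    have := Finset.le_max' _ _ (Finsupp.mem_support_iff.2 hcon)
    omega

lemma exists_degrevlex_maximal (S : Finset Mon) (hS : S.Nonempty) :
    ∃ u ∈ S, ∀ v ∈ S, ¬ degrevlexLT u v := by
  induction hS using Finset.Nonempty.cons_induction with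
  | singleton a => exact ⟨a, by simp, by simpa using degrevlexLT_irrefl a⟩
  | cons a s ha hs ih =>
    obtain ⟨u, hu, hmax⟩ := ih
    by_cases h : degrevlexLT u a
    · refine ⟨a, by simp, fun v hv hav => ?_⟩
      rcases Finset.mem_cons.1 hv with rfl | hv
      · exact degrevlexLT_irrefl _ hav
      · exact hmax v hv (degrevlexLT_trans h hav)
    · refine ⟨u, by simp [hu], fun v hv => ?_⟩
      rcases Finset.mem_cons.1 hv with rfl | hv
      · exact h
      · exact hmax v hv

/-- Polynomials with distinct leading monomials are linearly independent. -/
lemma linearIndependent_of_isLeadMon {K : Type} [Field K] (S : Finset Mon)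
    (F : Mon → MvPolynomial ℕ K) (hF : ∀ u ∈ S, IsLeadMon K (F u) u) :
    LinearIndependent K fun u : S => F u := by
  rw [Fintype.linearIndependent_iff]
  intro a ha
  by_contra hcon
  push Not at hcon
  obtain ⟨i, hi⟩ := hcon
  obtain ⟨u, hu, hmax⟩ := exists_degrevlex_maximal
    ((Finset.univ.filter fun i : S => a i ≠ 0).image Subtype.val) ⟨i, by simpa using hi⟩
  obtain ⟨u, hua, rfl⟩ := Finset.mem_image.1 hu
  have hau : a u ≠ 0 := (Finset.mem_filter.1 hua).2
  have h1 := congrArg (MvPolynomial.coeff (u : Mon)) ha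
  rw [MvPolynomial.coeff_sum, Finset.sum_eq_single u] at h1
  · rw [MvPolynomial.coeff_smul, MvPolynomial.coeff_zero, smul_eq_mul] at h1
    exact mul_ne_zero hau (MvPolynomial.mem_support_iff.1 (hF u u.2).1) h1
  · intro v _ hvu
    by_cases hav : a v = 0
    · simp [hav]
    · rw [MvPolynomial.coeff_smul]
      by_contra hne
      have h2 : (u : Mon) ∈ (F v).support := MvPolynomial.mem_support_iff.2 (right_ne_zero_of_mul hne)
      refine hmax v (Finset.mem_image.2 ⟨v, by simpa using hav, rfl⟩) ((hF v v.2).2 _ h2 ?_)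
      exact fun h => hvu (Subtype.ext h.symm)
  · simp

section
variable {K : Type} [Field K] {n : ℕ}

/-- The polynomials of degree at most `T` in the variables with index at most `N`. -/
def polyBox (K : Type) [Field K] (N T : ℕ) : Submodule K (MvPolynomial ℕ K) :=
  MvPolynomial.restrictSupport K (box N T)

lemma mem_polyBox {N T : ℕ} {p : MvPolynomial ℕ K} :
    p ∈ polyBox K N T ↔ ∀ u ∈ p.support, u ∈ box N T :=
  MvPolynomial.mem_restrictSupport_iff K

lemma mul_mem_polyBox {N S T : ℕ} {p q : MvPolynomial ℕ K} (hp : p ∈ polyBox K N S)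
    (hq : q ∈ polyBox K N T) : p * q ∈ polyBox K N (S + T) := by
  rw [mem_polyBox] at *
  intro u hu
  obtain ⟨a, ha, b, hb, rfl⟩ := Finset.mem_add.1 (MvPolynomial.support_mul p q hu)
  refine ⟨?_, fun j hj => ?_⟩
  · rw [degMon_add]
    exact add_le_add (hp a ha).1 (hq b hb).1
  · rcases Finset.mem_union.1 (Finsupp.support_add hj) with h | h
    · exact (hp a ha).2 j h
    · exact (hq b hb).2 j h

lemma mono_mem_polyBox {N T : ℕ} {u : Mon} (hu : u ∈ box N T) : mono K u ∈ polyBox K N T := by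
  rw [mem_polyBox, support_mono]
  simpa using hu

lemma X_eq_mono (i : ℕ) : (MvPolynomial.X i : MvPolynomial ℕ K) = mono K (Finsupp.single i 1) :=
  rfl

lemma X_mem_polyBox {N i : ℕ} (h : i ≤ N) :
    (MvPolynomial.X i : MvPolynomial ℕ K) ∈ polyBox K N 1 := by
  rw [X_eq_mono]
  refine mono_mem_polyBox ⟨(degMon_single i 1).le, fun j hj => ?_⟩
  have := Finsupp.support_single_subset hj
  rw [Finset.mem_singleton] at this
  omega

lemma mono_wordMon (k : ℕ) (w : ℕ → ℕ) :
    mono K (wordMon k w) = ∏ j ∈ Finset.range k, MvPolynomial.X (w j) := by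
  induction k with
  | zero => simp [wordMon_zero, mono]
  | succ k ih => rw [wordMon_succ, mono_add, ih, Finset.prod_range_succ, X_eq_mono]

lemma gAct_X_mem_polyBox (φ : Matrix (Fin n) (Fin n) K) {N : ℕ} (hN : n ≤ N) {j : ℕ}
    (hj : j ≤ N) : gAct K n φ (MvPolynomial.X j) ∈ polyBox K N 1 := by
  by_cases h : 1 ≤ j ∧ j ≤ n
  · rw [gAct_X φ h.1 h.2]
    refine Submodule.sum_mem _ fun i _ => ?_
    rw [← MvPolynomial.smul_eq_C_mul]
    exact Submodule.smul_mem _ _ (X_mem_polyBox (by omega))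
  · rw [gAct_X_of_not φ h]
    exact X_mem_polyBox hj

lemma gAct_prod_mem_polyBox (φ : Matrix (Fin n) (Fin n) K) {N : ℕ} (hN : n ≤ N) (k : ℕ)
    (w : ℕ → ℕ) (hw : ∀ j < k, w j ≤ N) :
    ∏ j ∈ Finset.range k, gAct K n φ (MvPolynomial.X (w j)) ∈ polyBox K N k := by
  induction k with
  | zero =>
    exact mono_mem_polyBox ⟨degMon_zero.le, by simp⟩
  | succ k ih =>
    rw [Finset.prod_range_succ]
    exact mul_mem_polyBox (ih fun j hj => hw j (by omega)) (gAct_X_mem_polyBox φ hN (hw k (by omega)))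

lemma polyBox_mono {N S T : ℕ} (h : S ≤ T) : polyBox K N S ≤ polyBox K N T := fun p hp => by
  rw [mem_polyBox] at *
  exact fun u hu => ⟨(hp u hu).1.trans h, (hp u hu).2⟩

lemma gAct_mem_polyBox (φ : Matrix (Fin n) (Fin n) K) {N T : ℕ} (hN : n ≤ N)
    {p : MvPolynomial ℕ K} (hp : p ∈ polyBox K N T) : gAct K n φ p ∈ polyBox K N T := by
  rw [mem_polyBox] at hp
  rw [MvPolynomial.as_sum p, map_sum]
  refine Submodule.sum_mem _ fun u hu => ?_
  have h1 : MvPolynomial.monomial u (MvPolynomial.coeff u p) =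
      MvPolynomial.coeff u p • mono K u := by simp [mono, MvPolynomial.smul_monomial]
  rw [h1, map_smul]
  refine Submodule.smul_mem _ _ (polyBox_mono (hp u hu).1 ?_)
  have h2 : mono K u = ∏ j ∈ Finset.range (degMon u), MvPolynomial.X (idx u j) := by
    rw [← mono_wordMon, wordMon_idx]
  rw [h2, map_prod]
  exact gAct_prod_mem_polyBox φ hN _ _ fun j hj => (hp u hu).2 _ (idx_mem_support u hj)

lemma lowerSpan_le_polyBox (φ : Matrix (Fin n) (Fin n) K) {k : ℕ} {w : ℕ → ℕ}
    (hw : ∀ j < k, w j + 2 * j ≤ n) : lowerSpan φ k w ≤ polyBox K n k := by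
  refine Submodule.span_le.2 ?_
  rintro _ ⟨c, ⟨-, hc⟩, rfl⟩
  refine gAct_prod_mem_polyBox φ le_rfl k (fun j => c j + 2 * j) fun j hj => ?_
  have := hc j hj
  have := hw j hj
  omega

/-- For `φ` with nonzero initial minors, the span of the `φ`-images of `α²(c)`, `c ≼ w`,
contains a polynomial with leading monomial `w`. -/
lemma exists_mem_lowerSpan_isLeadMon {φ : Matrix (Fin n) (Fin n) K} (hφ : InitialMinorsNeZero φ)
    (k : ℕ) (w : ℕ → ℕ) (hw : WSorted k w) (hwn : ∀ j < k, 1 ≤ w j ∧ w j + 2 * j ≤ n) :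
    ∃ h ∈ lowerSpan φ k w, IsLeadMon K h (wordMon k w) := by
  induction k with
  | zero =>
    refine ⟨1, Submodule.subset_span ⟨w, ⟨hw, by simp⟩, by simp [shiftProd]⟩, ?_, ?_⟩
    · simp [wordMon_zero]
    · intro v hv hne
      have hv0 : v ∈ (mono K 0).support := hv
      rw [support_mono, Finset.mem_singleton] at hv0
      exact absurd hv0 (wordMon_zero w ▸ hne)
  | succ p ih =>
    obtain ⟨g, hg, hlead⟩ := ih (fun i j hij hj => hw i j hij (by omega))
      fun j hj => hwn j (by omega)
    have hR : MvPolynomial.X (w p) * g ∈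
        lowerSpan φ (p + 1) w ⊔ (tailIdeal K (w p)).restrictScalars K := by
      clear hlead
      unfold lowerSpan at hg
      induction hg using Submodule.span_induction with
      | mem x hx =>
        obtain ⟨c, ⟨hc, hcw⟩, rfl⟩ := hx
        exact X_mul_shiftProd_mem hφ hw (hwn p (by omega)).2 _ c rfl hc hcw _ (hwn p (by omega)).1
      | zero => simp
      | add x y _ _ hx hy =>
        rw [mul_add]
        exact Submodule.add_mem _ hx hy
      | smul a x _ hx =>
        rw [mul_smul_comm]
        exact Submodule.smul_mem _ _ hx
    obtain ⟨h, hh, q, hq, hhq⟩ := Submodule.mem_sup.1 hR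
    have hsup : ∀ j ∈ (wordMon (p + 1) w).support, j ≤ w p := by
      intro i hi
      obtain ⟨j, hj, rfl⟩ := mem_support_wordMon.1 hi
      exact hw j p (by omega) (by omega)
    have hq' : ∀ v ∈ q.support, ∃ i, w p < i ∧ v i ≠ 0 := fun v hv =>
      MvPolynomial.mem_ideal_span_X_image.1 hq v hv
    have heq : h = g * MvPolynomial.X (w p) - q := by
      rw [mul_comm, ← hhq]
      ring
    refine ⟨h, hh, ?_, fun v hv hne => ?_⟩
    · have h1 : MvPolynomial.coeff (wordMon (p + 1) w) q = 0 := by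
        by_contra hcon
        obtain ⟨i, hi, hne⟩ := hq' _ (MvPolynomial.mem_support_iff.2 hcon)
        have := hsup i (Finsupp.mem_support_iff.2 hne)
        omega
      rw [MvPolynomial.mem_support_iff, heq, MvPolynomial.coeff_sub, h1, sub_zero, wordMon_succ,
        MvPolynomial.coeff_mul_X]
      exact MvPolynomial.mem_support_iff.1 hlead.1
    · have hvdeg : degMon v ≤ p + 1 :=
        (mem_polyBox.1 (lowerSpan_le_polyBox φ (fun j hj => (hwn j hj).2) hh) v hv).1
      by_cases hvq : v ∈ q.support
      · obtain ⟨i, hi, hvi⟩ := hq' v hvq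
        exact degrevlexLT_of_tail (by rw [degMon_wordMon]; exact hvdeg) hsup hi hvi
      · have hv' : v ∈ (g * MvPolynomial.X (w p)).support := by
          rw [MvPolynomial.mem_support_iff] at hv ⊢
          rw [heq, MvPolynomial.coeff_sub, MvPolynomial.notMem_support_iff.1 hvq, sub_zero] at hv
          exact hv
        rw [MvPolynomial.support_mul_X] at hv'
        obtain ⟨v', hv'', rfl⟩ := Finset.mem_map.1 hv'
        rw [wordMon_succ] at hne ⊢
        refine degrevlexLT_add (hlead.2 v' hv'' ?_) _
        rintro rfl
        exact hne rfl

end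

/-! ### The generic initial ideal of a squeezed ball -/

section
variable {K : Type} [Field K] {n d : ℕ} {U : Finset Mon}

lemma IsLeadMon.mul_mono {h : MvPolynomial ℕ K} {u : Mon} (hu : IsLeadMon K h u) (v : Mon) :
    IsLeadMon K (h * mono K v) (u + v) := by
  refine ⟨?_, fun x hx hne => ?_⟩
  · rw [MvPolynomial.mem_support_iff, mono, MvPolynomial.coeff_mul_monomial, mul_one]
    exact MvPolynomial.mem_support_iff.1 hu.1
  · obtain ⟨a, ha, b, hb, rfl⟩ := Finset.mem_add.1 (MvPolynomial.support_mul _ _ hx)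
    rw [support_mono, Finset.mem_singleton] at hb
    subst hb
    exact degrevlexLT_add (hu.2 a ha fun h => hne (h ▸ rfl)) _

lemma lowerSpan_le_map (φ : Matrix (Fin n) (Fin n) K) (hn : d < n)
    (hU : IsShiftedOrderIdeal (n - d - 1) U) {k : ℕ} {w : ℕ → ℕ} (hw : WSorted k w)
    (hkd : k ≤ (d + 1) / 2 + 1) (hwm : ∀ j < k, 1 ≤ w j ∧ w j ≤ n - d - 1)
    (hk : wordMon k w ∉ U) {h : MvPolynomial ℕ K} (hh : h ∈ lowerSpan φ k w) :
    h ∈ Ideal.map (gAct K n φ) (SRideal K n (squeezedBall n d U)) := by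
  have : lowerSpan φ k w ≤ (Ideal.map (gAct K n φ)
      (SRideal K n (squeezedBall n d U))).restrictScalars K := by
    refine Submodule.span_le.2 ?_
    rintro _ ⟨c, ⟨hc, hcw⟩, rfl⟩
    have hcU : wordMon k c ∉ U := fun hcU => hk (hU.2.2.2.2 _ hcU _
      (prec_wordMon hc hw fun j hj => (hcw j hj).2) fun i hi => by
        obtain ⟨j, hj, rfl⟩ := mem_support_wordMon.1 hi
        exact hwm j hj)
    have h1 := Ideal.mem_map_of_mem (gAct K n φ) (shift_mem_SRideal K hn hU hc hkd
      (fun j hj => ⟨(hcw j hj).1, (hcw j hj).2.trans (hwm j hj).2⟩) hcU)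
    rw [mono_wordMon, map_prod] at h1
    exact h1
  exact this hh

/-- Every monomial of `I(U)` is the leading monomial of an element of `φ(I_{B_d(U)})`. -/
lemma exists_isLeadMon_of_mem_IU {φ : Matrix (Fin n) (Fin n) K} (hφ : InitialMinorsNeZero φ)
    (hn : d < n) (hU : IsShiftedOrderIdeal (n - d - 1) U)
    (hdeg : ∀ u ∈ U, degMon u ≤ (d + 1) / 2) {u : Mon} (hu : mono K u ∈ IU K (n - d - 1) U) :
    ∃ h ∈ Ideal.map (gAct K n φ) (SRideal K n (squeezedBall n d U)), IsLeadMon K h u ∧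
      ∀ N, n ≤ N → (∀ j ∈ u.support, j ≤ N) → h ∈ polyBox K N (degMon u) := by
  obtain ⟨g, hgm, hgU, hgu⟩ := mono_mem_IU.1 hu
  -- a subword of `g` outside `U` whose degree is small enough for `α²` to stay inside `[n]`
  obtain ⟨k, hkg, hkd, hkU⟩ : ∃ k ≤ degMon g, k ≤ (d + 1) / 2 + 1 ∧ wordMon k (idx g) ∉ U := by
    rcases le_total (degMon g) ((d + 1) / 2 + 1) with h | h
    · exact ⟨degMon g, le_rfl, h, by rwa [wordMon_idx]⟩
    · refine ⟨_, h, le_rfl, fun hmem => ?_⟩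
      have := hdeg _ hmem
      rw [degMon_wordMon] at this
      omega
  have hsort : WSorted k (idx g) := fun i j hij hj => wSorted_idx g i j hij (by omega)
  have hwm : ∀ j < k, 1 ≤ idx g j ∧ idx g j ≤ n - d - 1 :=
    fun j hj => hgm _ (idx_mem_support g (by omega))
  have hwn : ∀ j < k, 1 ≤ idx g j ∧ idx g j + 2 * j ≤ n := fun j hj => by
    have := hwm j hj
    omega
  obtain ⟨h, hh, hlead⟩ := exists_mem_lowerSpan_isLeadMon hφ k (idx g) hsort hwn
  have hle : wordMon k (idx g) ≤ u := by
    refine le_trans ?_ hgu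
    conv_rhs => rw [← wordMon_idx g]
    exact wordMon_mono hkg _
  have hsum : wordMon k (idx g) + (u - wordMon k (idx g)) = u := add_tsub_cancel_of_le hle
  refine ⟨h * mono K (u - wordMon k (idx g)),
    Ideal.mul_mem_right _ _ (lowerSpan_le_map φ hn hU hsort hkd hwm hkU hh), ?_, ?_⟩
  · have := hlead.mul_mono (u - wordMon k (idx g))
    rwa [hsum] at this
  · intro N hN huN
    have h1 : h ∈ polyBox K N k := by
      have h2 := lowerSpan_le_polyBox φ (fun j hj => (hwn j hj).2) hh
      rw [mem_polyBox] at h2 ⊢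
      exact fun v hv => ⟨(h2 v hv).1, fun j hj => ((h2 v hv).2 j hj).trans hN⟩
    have h3 : degMon u = k + degMon (u - wordMon k (idx g)) := by
      conv_lhs => rw [← hsum]
      rw [degMon_add, degMon_wordMon]
    rw [h3]
    refine mul_mem_polyBox h1 (mono_mem_polyBox ⟨le_rfl, fun j hj => huN j ?_⟩)
    exact Finsupp.support_mono tsub_le_self hj

/-- An element of `φ(J)`, `J = I_{B_d(U)}`, of bounded degree in boundedly many variables lies in
the span of the images of the corresponding monomials of `J`. -/
lemma mem_span_of_mem_map {φ : Matrix (Fin n) (Fin n) K} (hdet : IsUnit φ.det)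
    {Γ : Finset (Finset ℕ)} {N T : ℕ} (hN : n ≤ N) {h : MvPolynomial ℕ K}
    (hh : h ∈ Ideal.map (gAct K n φ) (SRideal K n Γ)) (hbox : h ∈ polyBox K N T) :
    h ∈ Submodule.span K (((((box_finite N T).toFinset.filter fun v => mono K v ∈ SRideal K n Γ)
      ).image fun v => gAct K n φ (mono K v) : Finset (MvPolynomial ℕ K)) :
        Set (MvPolynomial ℕ K)) := by
  have hinv : ∀ p, gAct K n φ⁻¹ (gAct K n φ p) = p := fun p => by
    rw [gAct_gAct, Matrix.nonsing_inv_mul φ hdet, gAct_one]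
  have hinv' : gAct K n φ (gAct K n φ⁻¹ h) = h := by
    rw [gAct_gAct, Matrix.mul_nonsing_inv φ hdet, gAct_one]
  have hJ : gAct K n φ⁻¹ h ∈ SRideal K n Γ := by
    have hle : Ideal.map (gAct K n φ) (SRideal K n Γ) ≤
        Ideal.comap (gAct K n φ⁻¹) (SRideal K n Γ) := by
      refine Ideal.map_le_iff_le_comap.2 fun p hp => ?_
      rw [Ideal.mem_comap, Ideal.mem_comap, hinv]
      exact hp
    exact hle hh
  have hB := gAct_mem_polyBox φ⁻¹ hN hbox
  rw [← hinv', MvPolynomial.as_sum (gAct K n φ⁻¹ h), map_sum]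
  refine Submodule.sum_mem _ fun u hu => ?_
  have h1 : MvPolynomial.monomial u (MvPolynomial.coeff u (gAct K n φ⁻¹ h)) =
      MvPolynomial.coeff u (gAct K n φ⁻¹ h) • mono K u := by
    simp [mono, MvPolynomial.smul_monomial]
  rw [h1, map_smul]
  refine Submodule.smul_mem _ _ (Submodule.subset_span ?_)
  rw [Finset.mem_coe]
  refine Finset.mem_image_of_mem _ (Finset.mem_filter.2 ⟨?_, ?_⟩)
  · exact (Set.Finite.mem_toFinset _).2 (mem_polyBox.1 hB u hu)
  · exact mono_mem_SRideal.2 (mem_SRideal.1 hJ u hu)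

/-- Dimension count: there is no room in `φ(I_{B_d(U)})` for leading monomials outside `I(U)`. -/
lemma mem_IU_of_isLeadMon {φ : Matrix (Fin n) (Fin n) K} (hφ : InitialMinorsNeZero φ)
    (hdet : IsUnit φ.det) (hn : d < n) (hU : IsShiftedOrderIdeal (n - d - 1) U)
    (hdeg : ∀ u ∈ U, degMon u ≤ (d + 1) / 2) {f : MvPolynomial ℕ K} {v : Mon}
    (hf : f ∈ Ideal.map (gAct K n φ) (SRideal K n (squeezedBall n d U)))
    (hfv : IsLeadMon K f v) : mono K v ∈ IU K (n - d - 1) U := by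
  by_contra hv
  set N := max n (f.support.sup fun u => u.support.sup id) with hN
  set T := degMon v with hT
  have hnN : n ≤ N := le_max_left _ _
  have hfbox : f ∈ polyBox K N T := by
    rw [mem_polyBox]
    intro u hu
    refine ⟨?_, fun j hj => le_trans ?_ (le_max_right _ _)⟩
    · by_cases h : u = v
      · rw [h]
      · exact (hfv.2 u hu h).degMon_le
    · exact (Finset.le_sup (f := id) hj).trans
        (Finset.le_sup (f := fun u : Mon => u.support.sup id) hu)
  set J := SRideal K n (squeezedBall n d U) with hJ
  set E := (box_finite N T).toFinset with hE
  set A := E.filter fun u => mono K u ∈ IU K (n - d - 1) U with hA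
  have hvE : v ∈ E := (Set.Finite.mem_toFinset _).2 (mem_polyBox.1 hfbox v hfv.1)
  have hvA : v ∉ A := fun h => hv (Finset.mem_filter.1 h).2
  have key : ∀ u, ∃ h, u ∈ insert v A → IsLeadMon K h u ∧ h ∈ Ideal.map (gAct K n φ) J ∧
      h ∈ polyBox K N T := by
    intro u
    by_cases hu : u ∈ insert v A
    · rcases Finset.mem_insert.1 hu with rfl | huA
      · exact ⟨f, fun _ => ⟨hfv, hf, hfbox⟩⟩
      · obtain ⟨huE, huI⟩ := Finset.mem_filter.1 huA
        obtain ⟨hu1, hu2⟩ := (Set.Finite.mem_toFinset _).1 huE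
        obtain ⟨h, h1, h2, h3⟩ := exists_isLeadMon_of_mem_IU hφ hn hU hdeg huI
        exact ⟨h, fun _ => ⟨h2, h1, polyBox_mono hu1 (h3 N hnN hu2)⟩⟩
    · exact ⟨0, fun h => absurd h hu⟩
  choose F hF using key
  have hli := linearIndependent_of_isLeadMon (insert v A) F fun u hu => (hF u hu).1
  set W := (E.filter fun u => mono K u ∈ J).image fun u => gAct K n φ (mono K u) with hW
  have hcard := linearIndependent_le_span' _ hli (W : Set (MvPolynomial ℕ K)) (by
    rintro _ ⟨u, rfl⟩
    exact mem_span_of_mem_map hdet hnN (hF u u.2).2.1 (hF u u.2).2.2)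
  rw [Cardinal.mk_fintype, Nat.cast_le, Fintype.card_coe, Finset.card_insert_of_notMem hvA]
    at hcard
  have hWc : Fintype.card (W : Set (MvPolynomial ℕ K)) = W.card := by simp
  have hWle : W.card ≤ (E.filter fun u => mono K u ∈ J).card := Finset.card_image_le
  have h1 := Finset.card_filter_add_card_filter_not (s := E) fun u => mono K u ∈ IU K (n - d - 1) U
  have h2 := Finset.card_filter_add_card_filter_not (s := E) fun u => mono K u ∈ J
  have h3 := card_standard_le K hn hdeg (T := T) hnN
  rw [← hE, ← hJ] at h3
  rw [← hA] at h1
  omega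

lemma inIdeal_map_eq {φ : Matrix (Fin n) (Fin n) K} (hφ : InitialMinorsNeZero φ)
    (hdet : IsUnit φ.det) (hn : d < n) (hU : IsShiftedOrderIdeal (n - d - 1) U)
    (hdeg : ∀ u ∈ U, degMon u ≤ (d + 1) / 2) :
    inIdeal K (Ideal.map (gAct K n φ) (SRideal K n (squeezedBall n d U))) =
      IU K (n - d - 1) U := by
  apply le_antisymm
  · refine Ideal.span_le.2 ?_
    rintro _ ⟨f, hf, v, hfv, rfl⟩
    exact mem_IU_of_isLeadMon hφ hdet hn hU hdeg hf hfv
  · refine Ideal.span_le.2 ?_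
    rintro _ ⟨u, hum, huU, rfl⟩
    obtain ⟨h, h1, h2, -⟩ := exists_isLeadMon_of_mem_IU hφ hn hU hdeg
      (mono_mem_IU.2 ⟨u, hum, huU, le_rfl⟩ : mono K u ∈ IU K (n - d - 1) U)
    exact Ideal.subset_span ⟨h, h1, u, h2, rfl⟩

/-- The generic initial ideal is unique: two nonempty Zariski open sets of matrices over an
infinite field meet. -/
lemma gin_eq_of_ginSpec [Infinite K] {I J : Ideal (MvPolynomial ℕ K)} (h : GinSpec K n I J) :
    gin K n I = J := by
  have hex : ∃ J, GinSpec K n I J := ⟨J, h⟩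
  unfold gin
  rw [dif_pos hex]
  obtain ⟨P, hP, -, hPJ⟩ := h
  obtain ⟨Q, hQ, -, hQJ⟩ := hex.choose_spec
  obtain ⟨φ, hdet, hφ⟩ := exists_isUnit_det_eval_ne_zero (mul_ne_zero hP hQ)
  have hmul : evalMat K n φ (P * Q) = evalMat K n φ P * evalMat K n φ Q := map_mul _ _ _
  rw [hmul] at hφ
  rw [← hPJ φ hdet (left_ne_zero_of_mul hφ), ← hQJ φ hdet (right_ne_zero_of_mul hφ)]

lemma ginSpec_squeezedBall [Infinite K] (hn : d < n) (hU : IsShiftedOrderIdeal (n - d - 1) U)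
    (hdeg : ∀ u ∈ U, degMon u ≤ (d + 1) / 2) :
    GinSpec K n (SRideal K n (squeezedBall n d U)) (IU K (n - d - 1) U) :=
  ⟨minorPoly K n, minorPoly_ne_zero, exists_isUnit_det_eval_ne_zero minorPoly_ne_zero,
    fun _ hdet hφ => inIdeal_map_eq (initialMinorsNeZero_of_eval hφ) hdet hn hU hdeg⟩

end

end

/-- **Proposition (Murai, Prop. 4.1).** Let `n > d > 0`, let `B_d(U)` be a
squeezed `d`-ball on `[n]` and `I(U) ⊂ S_[n]` the ideal generated by all
monomials `u ∈ S_[n-d-1]` with `u ∉ U`. Then `I_{B_d(U)} = α²(I(U))`; in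
particular `gin(I_{B_d(U)}) = I(U)`. -/
theorem SRideal_squeezedBall_eq (K : Type) [Field K] [Infinite K]
    (n d : ℕ) (hd : 0 < d) (hn : d < n) (U : Finset Mon)
    (hU : IsShiftedOrderIdeal (n - d - 1) U)
    (hdeg : ∀ u ∈ U, degMon u ≤ (d + 1) / 2) :
    SRideal K n (squeezedBall n d U)
        = sigmaIdeal K (alphaMap fun j => 2 * j) (IU K (n - d - 1) U) ∧
      gin K n (SRideal K n (squeezedBall n d U)) = IU K (n - d - 1) U := by
  exact ⟨SRideal_eq_sigmaIdeal K hn hU hdeg, gin_eq_of_ginSpec (ginSpec_squeezedBall hn hU hdeg)⟩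

end SqueezedSpheres
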